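/- arXiv:1911.13268 — 9 statements merged into one kernel-verified Lean document; each statement's English description precedes it below -/
import Mathlib

section
/- Let A ∈ ℝ^{n×m}, let q ∈ [2,∞], κ ≥ 1 and r ≥ 1. Then the minimum of ‖A − ΠA‖ over all orthogonal projection matrices Π ∈ ℝ^{n×n} of rank at most r with ‖Π‖_{q→2} ≤ κ equals the minimum of ‖A − B‖ over all matrices B ∈ ℝ^{n×m} of rank at most r such that the orthogonal projection Π(B) onto the column space of B satisfies ‖Π(B)‖_{q→2} ≤ κ, where ‖·‖ denotes the spectral norm. The same equality holds when ‖·‖ is the Frobenius norm. -/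
open scoped BigOperators ENNReal
open Matrix

/-- The `ℓ_q` norm of a real vector, for `q ∈ [1,∞]` given as an extended nonnegative real
(`q = ⊤` is the max/sup norm). -/
noncomputable def vecNorm {ι : Type*} [Fintype ι] (q : ℝ≥0∞) (v : ι → ℝ) : ℝ :=
  if q = ⊤ then ⨆ i, |v i| else (∑ i, |v i| ^ q.toReal) ^ (1 / q.toReal)

/-- The `q → p` operator norm of a real matrix:
`‖M‖_{q→p} = sup { ‖Mx‖_p : ‖x‖_q ≤ 1 }`. -/
noncomputable def opNorm {ι₁ ι₂ : Type*} [Fintype ι₁] [Fintype ι₂] (q p : ℝ≥0∞)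
    (M : Matrix ι₁ ι₂ ℝ) : ℝ :=
  sSup {y : ℝ | ∃ x : ι₂ → ℝ, vecNorm q x ≤ 1 ∧ y = vecNorm p (M.mulVec x)}

/-- The squared Frobenius norm of a real matrix. -/
noncomputable def frobSq {ι₁ ι₂ : Type*} [Fintype ι₁] [Fintype ι₂] (M : Matrix ι₁ ι₂ ℝ) : ℝ :=
  ∑ i, ∑ j, (M i j) ^ 2

lemma vecNorm_two {ι : Type*} [Fintype ι] (v : ι → ℝ) :
    vecNorm 2 v = Real.sqrt (v ⬝ᵥ v) := by
  unfold vecNorm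
  rw [if_neg (by simp), Real.sqrt_eq_rpow]
  simp [dotProduct, ← pow_two]

lemma abs_le_one_of_vecNorm {ι : Type*} [Fintype ι] (q : ℝ≥0∞) (hq : 2 ≤ q) (v : ι → ℝ)
    (h : vecNorm q v ≤ 1) (i : ι) : |v i| ≤ 1 := by
  unfold vecNorm at h
  split_ifs at h with hT
  · exact (le_ciSup (f := fun i => |v i|) (Set.finite_range _).bddAbove i).trans h
  · have h2 : (2 : ℝ) ≤ q.toReal := by
      have := ENNReal.toReal_mono hT hq
      simpa using this
    have hpos : 0 < q.toReal := by linarith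
    by_contra! hc
    have h1 : 1 < |v i| ^ q.toReal := Real.one_lt_rpow hc hpos
    have h3 : |v i| ^ q.toReal ≤ ∑ i, |v i| ^ q.toReal :=
      Finset.single_le_sum (f := fun i => |v i| ^ q.toReal)
        (fun j _ => Real.rpow_nonneg (abs_nonneg _) _) (Finset.mem_univ i)
    have := Real.one_lt_rpow (h1.trans_le h3) (one_div_pos.2 hpos)
    linarith

lemma opNorm_bdd {ι₁ ι₂ : Type*} [Fintype ι₁] [Fintype ι₂] (q : ℝ≥0∞) (hq : 2 ≤ q)
    (M : Matrix ι₁ ι₂ ℝ) :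
    BddAbove {y : ℝ | ∃ x : ι₂ → ℝ, vecNorm q x ≤ 1 ∧ y = vecNorm 2 (M.mulVec x)} := by
  refine ⟨Real.sqrt (∑ i, (∑ j, |M i j|) ^ 2), ?_⟩
  rintro y ⟨x, hx, rfl⟩
  rw [vecNorm_two]
  apply Real.sqrt_le_sqrt
  unfold dotProduct
  apply Finset.sum_le_sum
  intro i _
  rw [← pow_two]
  apply sq_le_sq'
  all_goals
    have : |(M *ᵥ x) i| ≤ ∑ j, |M i j| := by
      unfold mulVec dotProduct
      refine (Finset.abs_sum_le_sum_abs _ _).trans (Finset.sum_le_sum fun j _ => ?_)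
      rw [abs_mul]
      exact mul_le_of_le_one_right (abs_nonneg _) (abs_le_one_of_vecNorm q hq x hx j)
  · linarith [neg_abs_le ((M *ᵥ x) i)]
  · linarith [le_abs_self ((M *ᵥ x) i)]

lemma vecNorm_zero_le (q : ℝ≥0∞) (hq : 2 ≤ q) {ι : Type*} [Fintype ι] :
    vecNorm q (0 : ι → ℝ) ≤ 1 := by
  unfold vecNorm
  split_ifs with hT
  · simp
  · have h2 : (2 : ℝ) ≤ q.toReal := by
      have := ENNReal.toReal_mono hT hq
      simpa using this
    have h0 : q.toReal ≠ 0 := by linarith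
    simp [Real.zero_rpow h0, Real.zero_rpow (inv_ne_zero h0)]

lemma opNorm_mono {ι₁ ι₂ ι₃ : Type*} [Fintype ι₁] [Fintype ι₂] [Fintype ι₃]
    (q : ℝ≥0∞) (hq : 2 ≤ q)
    (M : Matrix ι₁ ι₂ ℝ) (N : Matrix ι₃ ι₂ ℝ)
    (h : ∀ x, vecNorm 2 (M *ᵥ x) ≤ vecNorm 2 (N *ᵥ x)) : opNorm q 2 M ≤ opNorm q 2 N := by
  unfold opNorm
  refine csSup_le (Set.nonempty_of_mem ⟨0, vecNorm_zero_le q hq, rfl⟩) ?_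
  rintro y ⟨x, hx, rfl⟩
  exact (h x).trans (le_csSup (opNorm_bdd q hq N) ⟨x, hx, rfl⟩)

lemma opNorm_nonneg {ι₁ ι₂ : Type*} [Fintype ι₁] [Fintype ι₂] (q : ℝ≥0∞)
    (M : Matrix ι₁ ι₂ ℝ) : 0 ≤ opNorm q 2 M := by
  apply Real.sSup_nonneg
  rintro y ⟨x, hx, rfl⟩
  rw [vecNorm_two]; positivity

lemma opNorm_zero {ι₁ ι₂ : Type*} [Fintype ι₁] [Fintype ι₂] (q : ℝ≥0∞) :
    opNorm q 2 (0 : Matrix ι₁ ι₂ ℝ) ≤ 0 := by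
  apply Real.sSup_nonpos
  rintro y ⟨x, hx, rfl⟩
  simp [vecNorm_two]

lemma proj_dot_le {n : ℕ} (P : Matrix (Fin n) (Fin n) ℝ) (hs : P.IsSymm) (hp : P * P = P)
    (y : Fin n → ℝ) : (P *ᵥ y) ⬝ᵥ (P *ᵥ y) ≤ y ⬝ᵥ y := by
  have h1 : (P *ᵥ y) ⬝ᵥ (P *ᵥ y) = y ⬝ᵥ (P *ᵥ y) := by
    rw [dotProduct_mulVec, vecMul_mulVec, ← dotProduct_mulVec, hs.eq, hp]
  have h2 : 0 ≤ (y - P *ᵥ y) ⬝ᵥ (y - P *ᵥ y) :=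
    Finset.sum_nonneg fun i _ => mul_self_nonneg _
  rw [sub_dotProduct, dotProduct_sub, dotProduct_sub, h1, dotProduct_comm (P *ᵥ y) y] at h2
  linarith

lemma exists_proj {n : ℕ} (V : Submodule ℝ (Fin n → ℝ)) :
    ∃ P : Matrix (Fin n) (Fin n) ℝ, P.IsSymm ∧ P * P = P ∧ LinearMap.range P.mulVecLin = V := by
  let U : Submodule ℝ (EuclideanSpace ℝ (Fin n)) :=
    V.map (WithLp.linearEquiv 2 ℝ (Fin n → ℝ)).symm.toLinearMap
  let P : Matrix (Fin n) (Fin n) ℝ :=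
    (Matrix.toEuclideanCLM (n := Fin n) (𝕜 := ℝ)).symm U.starProjection
  have hP : Matrix.toEuclideanCLM (n := Fin n) (𝕜 := ℝ) P = U.starProjection :=
    StarAlgEquiv.apply_symm_apply _ _
  have happ : ∀ x, P *ᵥ x = WithLp.ofLp (U.starProjection (WithLp.toLp 2 x)) := by
    intro x
    rw [← hP]; simp
  have hU : ∀ x : Fin n → ℝ, WithLp.toLp 2 x ∈ U ↔ x ∈ V := by
    intro x
    simp only [U, Submodule.mem_map]
    constructor
    · rintro ⟨y, hy, h⟩
      have : y = x := by simpa using congrArg WithLp.ofLp h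
      exact this ▸ hy
    · intro h; exact ⟨x, h, rfl⟩
  refine ⟨P, ?_, ?_, ?_⟩
  · have : star P = P := by
      apply EquivLike.injective (Matrix.toEuclideanCLM (n := Fin n) (𝕜 := ℝ))
      rw [map_star, hP]
      exact (isSelfAdjoint_starProjection U).star_eq
    simpa [Matrix.IsSymm, star_eq_conjTranspose] using this
  · apply EquivLike.injective (Matrix.toEuclideanCLM (n := Fin n) (𝕜 := ℝ))
    rw [map_mul, hP]
    exact U.isIdempotentElem_starProjection
  · ext y
    constructor
    · rintro ⟨x, rfl⟩
      rw [← hU, mulVecLin_apply, happ]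
      exact Submodule.starProjection_apply_mem _ _
    · intro hy
      refine ⟨y, ?_⟩
      rw [mulVecLin_apply, happ, Submodule.starProjection_eq_self_iff.2 ((hU y).2 hy)]

lemma proj_mul_of_range {n m : ℕ} (P : Matrix (Fin n) (Fin n) ℝ) (hp : P * P = P)
    (B : Matrix (Fin n) (Fin m) ℝ)
    (h : LinearMap.range B.mulVecLin ≤ LinearMap.range P.mulVecLin) : P * B = B := by
  apply Matrix.ext_of_mulVec_single
  intro i
  obtain ⟨z, hz⟩ := h ⟨Pi.single i 1, rfl⟩
  simp only [mulVecLin_apply] at hz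
  rw [← mulVec_mulVec, ← hz, mulVec_mulVec, hp]

lemma sInf_core {n m : ℕ} (A : Matrix (Fin n) (Fin m) ℝ)
    (q : ℝ≥0∞) (hq : 2 ≤ q) (κ : ℝ) (hκ : 1 ≤ κ) (r : ℕ)
    (N : Matrix (Fin n) (Fin m) ℝ → ℝ) (hN0 : ∀ M, 0 ≤ N M)
    (hN : ∀ Q : Matrix (Fin n) (Fin n) ℝ, Q.IsSymm → Q * Q = Q → ∀ M, N (Q * M) ≤ N M) :
    sInf {x : ℝ | ∃ P : Matrix (Fin n) (Fin n) ℝ, P.IsSymm ∧ P * P = P ∧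
          P.rank ≤ r ∧ opNorm q 2 P ≤ κ ∧ x = N (A - P * A)} =
      sInf {x : ℝ | ∃ B : Matrix (Fin n) (Fin m) ℝ, ∃ P : Matrix (Fin n) (Fin n) ℝ,
          B.rank ≤ r ∧ P.IsSymm ∧ P * P = P ∧
          LinearMap.range P.mulVecLin = LinearMap.range B.mulVecLin ∧
          opNorm q 2 P ≤ κ ∧ x = N (A - B)} := by
  have hsub : {x : ℝ | ∃ P : Matrix (Fin n) (Fin n) ℝ, P.IsSymm ∧ P * P = P ∧
          P.rank ≤ r ∧ opNorm q 2 P ≤ κ ∧ x = N (A - P * A)} ⊆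
      {x : ℝ | ∃ B : Matrix (Fin n) (Fin m) ℝ, ∃ P : Matrix (Fin n) (Fin n) ℝ,
          B.rank ≤ r ∧ P.IsSymm ∧ P * P = P ∧
          LinearMap.range P.mulVecLin = LinearMap.range B.mulVecLin ∧
          opNorm q 2 P ≤ κ ∧ x = N (A - B)} := by
    rintro x ⟨P, hs, hp, hr, hk, rfl⟩
    obtain ⟨Q, hQs, hQp, hQr⟩ := exists_proj (LinearMap.range (P * A).mulVecLin)
    refine ⟨P * A, Q, (rank_mul_le_left P A).trans hr, hQs, hQp, hQr, ?_, rfl⟩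
    have hPQ : P * Q = Q := by
      apply proj_mul_of_range P hp
      rw [hQr]
      rintro _ ⟨z, rfl⟩
      exact ⟨A *ᵥ z, by simp⟩
    have hQP : Q * P = Q := by
      have := congrArg Matrix.transpose hPQ
      rwa [transpose_mul, hs.eq, hQs.eq] at this
    refine le_trans (opNorm_mono q hq Q P fun x => ?_) hk
    rw [vecNorm_two, vecNorm_two]
    apply Real.sqrt_le_sqrt
    rw [← hQP, ← mulVec_mulVec]
    exact proj_dot_le Q hQs hQp _
  have hne : {x : ℝ | ∃ P : Matrix (Fin n) (Fin n) ℝ, P.IsSymm ∧ P * P = P ∧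
          P.rank ≤ r ∧ opNorm q 2 P ≤ κ ∧ x = N (A - P * A)}.Nonempty :=
    ⟨_, 0, by simp [Matrix.IsSymm], by simp, by simp, (opNorm_zero q).trans (by linarith), rfl⟩
  apply le_antisymm
  · apply le_csInf (hne.mono hsub)
    rintro x ⟨B, P, hr, hs, hp, hR, hk, rfl⟩
    have hPB : P * B = B := proj_mul_of_range P hp B hR.ge
    have hle : N (A - P * A) ≤ N (A - B) := by
      have e : A - P * A = (1 - P) * (A - B) := by
        rw [Matrix.sub_mul, Matrix.mul_sub, Matrix.mul_sub, hPB]; simp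
      rw [e]
      apply hN
      · simp [Matrix.IsSymm, hs.eq]
      · simp [Matrix.sub_mul, Matrix.mul_sub, hp]
    refine le_trans (csInf_le ⟨0, ?_⟩ ⟨P, hs, hp, ?_, hk, rfl⟩) hle
    · rintro _ ⟨_, _, _, _, _, rfl⟩; exact hN0 _
    · unfold Matrix.rank at hr ⊢
      rwa [hR]
  · apply csInf_le_csInf ⟨0, ?_⟩ hne hsub
    rintro _ ⟨_, _, _, _, _, _, _, rfl⟩; exact hN0 _

/-- Minimizing `‖A − ΠA‖` over rank-`≤ r` orthogonal projections `Π` with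
`‖Π‖_{q→2} ≤ κ` gives the same value as minimizing `‖A − B‖` over rank-`≤ r` matrices `B`
whose column space has a `(κ,q)`-robust orthogonal projection, both for the spectral norm
(`‖·‖_{2→2}`) and for the Frobenius norm. -/
theorem low_rank_objective_equivalence {n m : ℕ} (A : Matrix (Fin n) (Fin m) ℝ)
    (q : ℝ≥0∞) (hq : 2 ≤ q) (κ : ℝ) (hκ : 1 ≤ κ) (r : ℕ) (hr : 1 ≤ r) :
    sInf {x : ℝ | ∃ P : Matrix (Fin n) (Fin n) ℝ, P.IsSymm ∧ P * P = P ∧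
          P.rank ≤ r ∧ opNorm q 2 P ≤ κ ∧ x = opNorm 2 2 (A - P * A)} =
      sInf {x : ℝ | ∃ B : Matrix (Fin n) (Fin m) ℝ, ∃ P : Matrix (Fin n) (Fin n) ℝ,
          B.rank ≤ r ∧ P.IsSymm ∧ P * P = P ∧
          LinearMap.range P.mulVecLin = LinearMap.range B.mulVecLin ∧
          opNorm q 2 P ≤ κ ∧ x = opNorm 2 2 (A - B)} ∧
    sInf {x : ℝ | ∃ P : Matrix (Fin n) (Fin n) ℝ, P.IsSymm ∧ P * P = P ∧
          P.rank ≤ r ∧ opNorm q 2 P ≤ κ ∧ x = Real.sqrt (frobSq (A - P * A))} =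
      sInf {x : ℝ | ∃ B : Matrix (Fin n) (Fin m) ℝ, ∃ P : Matrix (Fin n) (Fin n) ℝ,
          B.rank ≤ r ∧ P.IsSymm ∧ P * P = P ∧
          LinearMap.range P.mulVecLin = LinearMap.range B.mulVecLin ∧
          opNorm q 2 P ≤ κ ∧ x = Real.sqrt (frobSq (A - B))} := by
  refine ⟨sInf_core A q hq κ hκ r (fun M => opNorm 2 2 M) (fun M => opNorm_nonneg 2 M) ?_,
    sInf_core A q hq κ hκ r (fun M => Real.sqrt (frobSq M)) (fun M => Real.sqrt_nonneg _) ?_⟩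
  · intro Q hs hp M
    apply opNorm_mono 2 le_rfl
    intro x
    rw [vecNorm_two, vecNorm_two, ← mulVec_mulVec]
    exact Real.sqrt_le_sqrt (proj_dot_le Q hs hp _)
  · intro Q hs hp M
    apply Real.sqrt_le_sqrt
    unfold frobSq
    rw [Finset.sum_comm, Finset.sum_comm (f := fun i j => M i j ^ 2)]
    apply Finset.sum_le_sum
    intro j _
    have := proj_dot_le Q hs hp (fun i => M i j)
    simpa [dotProduct, mulVec, Matrix.mul_apply, pow_two] using this
end

section
/- There is a universal constant c > 0 with the following property. Let A ∈ ℝ^{n×m} be a matrix each of whose columns A_j satisfies ‖A_j‖₂ ∈ [1/10, 10], and suppose there is a unit vector v ∈ ℝⁿ with ‖v‖₁ ≥ κ for some κ ≥ 2 such that Π* = vvᵀ satisfies Π*A = A (every column of A is a scalar multiple of v). Then there exists δ₀ > 0 (depending on A) such that for every δ ∈ (0, δ₀] there exist a matrix A' ∈ ℝ^{n×m} with max_{i,j} |A_{ij} − A'_{ij}| ≤ δ and a rank-one orthogonal projection matrix Π' = ūūᵀ (ū a unit vector) such that: (1) ‖Π'‖_{∞→2} < ‖Π*‖_{∞→2};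 (2) Π'A' = A'; and (3) ‖A − Π'A‖_F ≥ c·δκ√m. -/
open scoped BigOperators ENNReal
open Matrix

lemma vecNorm_two_eq {ι : Type*} [Fintype ι] (v : ι → ℝ) :
    vecNorm 2 v = Real.sqrt (∑ i, v i ^ 2) := by
  unfold vecNorm
  rw [if_neg (by simp), Real.sqrt_eq_rpow]
  simp

lemma vmv_mulVec {n : ℕ} (u x : Fin n → ℝ) :
    (Matrix.vecMulVec u u).mulVec x = fun i => u i * ∑ k, u k * x k := by
  ext i
  simp [Matrix.mulVec, dotProduct, Matrix.vecMulVec_apply, Finset.mul_sum, mul_assoc]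

lemma opNorm_vmv {n : ℕ} (u : Fin n → ℝ) (hu : ∑ i, u i ^ 2 = 1) :
    opNorm ⊤ 2 (Matrix.vecMulVec u u) = ∑ i, |u i| := by
  have key : ∀ x : Fin n → ℝ,
      vecNorm 2 ((Matrix.vecMulVec u u).mulVec x) = |∑ k, u k * x k| := by
    intro x
    rw [vmv_mulVec, vecNorm_two_eq]
    simp_rw [mul_pow]
    rw [← Finset.sum_mul, hu, one_mul, Real.sqrt_sq_eq_abs]
  unfold opNorm
  apply IsGreatest.csSup_eq
  constructor
  · refine ⟨fun i => SignType.sign (u i), ?_, ?_⟩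
    · unfold vecNorm
      rw [if_pos rfl]
      apply Real.iSup_le _ zero_le_one
      intro i
      rcases lt_trichotomy (u i) 0 with h | h | h <;> simp [h]
    · rw [key]
      have : ∀ k, u k * ((SignType.sign (u k) : SignType) : ℝ) = |u k| := by
        intro k
        rcases lt_trichotomy (u k) 0 with h | h | h
        · simp [h, abs_of_neg h]
        · simp [h]
        · simp [h, abs_of_pos h]
      simp_rw [this]
      rw [abs_of_nonneg (Finset.sum_nonneg fun i _ => abs_nonneg _)]
  · rintro y ⟨x, hx, rfl⟩
    rw [key]
    refine (Finset.abs_sum_le_sum_abs _ _).trans (Finset.sum_le_sum fun i _ => ?_)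
    have hxi : |x i| ≤ 1 := by
      unfold vecNorm at hx
      rw [if_pos rfl] at hx
      exact (le_ciSup (f := fun i => |x i|) (Set.finite_range _).bddAbove i).trans hx
    rw [abs_mul]
    exact mul_le_of_le_one_right (abs_nonneg _) hxi

/-- Balanced signs. -/
lemma exists_signs {ι : Type*} [DecidableEq ι] (v : ι → ℝ) (s : Finset ι) :
    ∃ d : ι → ℝ, (∀ i, d i = 1 ∨ d i = -1) ∧ (∑ i ∈ s, d i * v i) ^ 2 ≤ ∑ i ∈ s, v i ^ 2 := by
  induction s using Finset.induction_on with
  | empty => exact ⟨fun _ => 1, fun _ => Or.inl rfl, by simp⟩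
  | insert a s ha ih =>
    obtain ⟨d, hd, hs⟩ := ih
    have hsum : ∀ t : ℝ, ∑ i ∈ s, Function.update d a t i * v i = ∑ i ∈ s, d i * v i := by
      intro t
      refine Finset.sum_congr rfl fun i hi => ?_
      rw [Function.update_of_ne (by rintro rfl; exact ha hi)]
    have hgen : ∀ t : ℝ, (t = 1 ∨ t = -1) → ∀ i,
        Function.update d a t i = 1 ∨ Function.update d a t i = -1 := by
      intro t ht i
      by_cases h : i = a
      · subst h; simpa using ht
      · rw [Function.update_of_ne h]; exact hd i
    rcases le_total 0 ((∑ i ∈ s, d i * v i) * v a) with h | h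
    · refine ⟨Function.update d a (-1), hgen _ (Or.inr rfl), ?_⟩
      rw [Finset.sum_insert ha, Finset.sum_insert ha, hsum, Function.update_self]
      nlinarith
    · refine ⟨Function.update d a 1, hgen _ (Or.inl rfl), ?_⟩
      rw [Finset.sum_insert ha, Finset.sum_insert ha, hsum, Function.update_self]
      nlinarith

lemma exists_gap {n : ℕ} (v : Fin n → ℝ) : ∃ η : ℝ, 0 < η ∧ ∀ i, v i ≠ 0 → η ≤ |v i| := by
  by_cases h : (Finset.univ.filter fun i => v i ≠ 0).Nonempty
  · obtain ⟨a, ha, hmin⟩ := Finset.exists_min_image _ (fun i => |v i|) h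
    refine ⟨|v a|, abs_pos.mpr (by simpa using ha), fun i hi => hmin i (by simpa using hi)⟩
  · refine ⟨1, one_pos, fun i hi => absurd ⟨i, by simpa using hi⟩ h⟩

/-- The perturbation direction. -/
lemma exists_dir {n : ℕ} (v : Fin n → ℝ) (hv : ∑ i, v i ^ 2 = 1) :
    ∃ d : Fin n → ℝ, (∀ i, |d i| ≤ 1) ∧ (∀ i, v i = 0 → d i = 0) ∧
      (∑ i, d i * v i) ^ 2 ≤ 1 ∧ (∑ i, |v i|) ^ 2 ≤ ∑ i, d i ^ 2 ∧ ∑ i, d i ^ 2 ≤ n ∧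
      (∑ i, |v i|) * (∑ i, d i * v i) ≤ ∑ i, d i * SignType.sign (v i) := by
  obtain ⟨e, he, hs⟩ := exists_signs v Finset.univ
  rw [hv] at hs
  set f : Fin n → ℝ := fun i => if v i = 0 then 0 else e i with hf
  have hfv : ∀ i, f i * v i = e i * v i := by
    intro i; by_cases h : v i = 0 <;> simp [hf, h]
  have hf1 : ∀ i, |f i| ≤ 1 := by
    intro i
    by_cases h : v i = 0
    · simp [hf, h]
    · rcases he i with h' | h' <;> simp [hf, h, h']
  have hf0 : ∀ i, v i = 0 → f i = 0 := fun i h => by simp [hf, h]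
  have hp : (∑ i, f i * v i) ^ 2 ≤ 1 := by simpa only [hfv] using hs
  have hD : (∑ i, |v i|) ^ 2 ≤ ∑ i, f i ^ 2 := by
    have h1 : ∀ i, |v i| = |f i| * |v i| := by
      intro i
      by_cases h : v i = 0
      · simp [h]
      · rcases he i with h' | h' <;> simp [hf, h, h']
    have h2 := Finset.sum_mul_sq_le_sq_mul_sq Finset.univ (fun i => |f i|) (fun i => |v i|)
    simp only [sq_abs, hv, mul_one, ← h1] at h2
    exact h2
  have hDn : ∑ i, f i ^ 2 ≤ n := by
    calc ∑ i, f i ^ 2 ≤ ∑ i : Fin n, (1 : ℝ) :=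
          Finset.sum_le_sum fun i _ => (sq_le_one_iff_abs_le_one _).2 (hf1 i)
      _ = n := by simp
  rcases le_total ((∑ i, |v i|) * (∑ i, f i * v i)) (∑ i, f i * SignType.sign (v i)) with h | h
  · exact ⟨f, hf1, hf0, hp, hD, hDn, h⟩
  · refine ⟨fun i => - f i, by simpa using hf1, by simpa using hf0, ?_, by simpa using hD,
      by simpa using hDn, ?_⟩
    · simpa [Finset.sum_neg_distrib] using hp
    · simpa [Finset.sum_neg_distrib] using h

set_option maxHeartbeats 4000000 in
theorem additive_error_lower_bound :
    ∃ c : ℝ, 0 < c ∧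
      ∀ (n m : ℕ) (A : Matrix (Fin n) (Fin m) ℝ) (v : Fin n → ℝ) (κ : ℝ),
        (∀ j, 1 / 10 ≤ vecNorm 2 (fun i => A i j) ∧ vecNorm 2 (fun i => A i j) ≤ 10) →
        vecNorm 2 v = 1 → 2 ≤ κ → κ ≤ ∑ i, |v i| →
        Matrix.vecMulVec v v * A = A →
        ∃ δ₀ : ℝ, 0 < δ₀ ∧
          ∀ δ : ℝ, 0 < δ → δ ≤ δ₀ →
            ∃ (A' : Matrix (Fin n) (Fin m) ℝ) (u : Fin n → ℝ),
              (∀ i j, |A i j - A' i j| ≤ δ) ∧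
              vecNorm 2 u = 1 ∧
              opNorm ⊤ 2 (Matrix.vecMulVec u u) < opNorm ⊤ 2 (Matrix.vecMulVec v v) ∧
              Matrix.vecMulVec u u * A' = A' ∧
              c * δ * κ * Real.sqrt m ≤
                Real.sqrt (frobSq (A - Matrix.vecMulVec u u * A)) := by
  refine ⟨1 / 200, by norm_num, ?_⟩
  intro n m A v κ hcol hv hκ hκv hA
  have hv2 : ∑ i, v i ^ 2 = 1 := by
    rw [vecNorm_two_eq, Real.sqrt_eq_one] at hv; exact hv
  set K := ∑ i, |v i| with hK
  obtain ⟨a, ha⟩ : ∃ a : Fin m → ℝ, ∀ i j, A i j = v i * a j := by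
    refine ⟨fun j => ∑ k, v k * A k j, fun i j => ?_⟩
    conv_lhs => rw [← hA]
    simp [Matrix.mul_apply, Matrix.vecMulVec_apply, Finset.mul_sum, mul_assoc]
  have hab : ∀ j, 1 / 10 ≤ |a j| ∧ |a j| ≤ 10 := by
    intro j
    have h : vecNorm 2 (fun i => A i j) = |a j| := by
      rw [vecNorm_two_eq]
      simp_rw [ha, mul_pow]
      rw [← Finset.sum_mul, hv2, one_mul, Real.sqrt_sq_eq_abs]
    rw [← h]; exact hcol j
  obtain ⟨d, hd1, hd0, hp, hD, hDn, hS⟩ := exists_dir v hv2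
  obtain ⟨η, hη, hgap⟩ := exists_gap v
  rw [← hK] at hD hS
  set p := ∑ i, d i * v i with hpdef
  set D := ∑ i, d i ^ 2 with hDdef
  set S := ∑ i, d i * ((SignType.sign (v i) : SignType) : ℝ) with hSdef
  refine ⟨min (10 * η) (10 * (1 / (2 * (n + 1)))), by positivity, ?_⟩
  intro δ hδ hδ0
  obtain ⟨ε, rfl⟩ : ∃ ε, δ = 10 * ε := ⟨δ / 10, by ring⟩
  have hε : 0 < ε := by linarith
  have hεη : ε ≤ η := by linarith [hδ0.trans (min_le_left _ _)]
  have hεn : ε ≤ 1 / (2 * (n + 1)) := by linarith [hδ0.trans (min_le_right _ _)]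
  have hn0 : (0 : ℝ) ≤ n := Nat.cast_nonneg n
  rw [le_div_iff₀ (by positivity)] at hεn
  have hε2 : ε ≤ 1 / 2 := by nlinarith
  have hεD : ε ^ 2 * D ≤ 1 := by
    have h1 : ε * D ≤ 1 / 2 := by nlinarith
    nlinarith
  have hp1 : |p| ≤ 1 := (sq_le_one_iff_abs_le_one _).1 hp
  obtain ⟨hpl, hpu⟩ := abs_le.1 hp1
  have hK2 : 2 ≤ K := hκ.trans hκv
  have hDp : 3 / 4 * K ^ 2 ≤ D - p ^ 2 := by nlinarith
  have hDp0 : 0 < D - p ^ 2 := by nlinarith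
  set w : Fin n → ℝ := fun i => v i - ε * d i with hw
  set q := ∑ i, w i ^ 2 with hq
  have hqe : q = (1 - ε * p) ^ 2 + ε ^ 2 * (D - p ^ 2) := by
    have : q = ∑ i, v i ^ 2 - 2 * ε * p + ε ^ 2 * D := by
      rw [hq, hpdef, hDdef, Finset.mul_sum, Finset.mul_sum, ← Finset.sum_sub_distrib,
        ← Finset.sum_add_distrib]
      refine Finset.sum_congr rfl fun i _ => ?_
      simp only [hw]; ring
    rw [this, hv2]; ring
  have hwv : ∑ i, w i * v i = 1 - ε * p := by
    rw [← hv2, hpdef, Finset.mul_sum, ← Finset.sum_sub_distrib]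
    refine Finset.sum_congr rfl fun i _ => ?_
    simp only [hw]; ring
  have hqpos : 0 < q := by
    rw [hqe]; have := mul_pos (pow_pos hε 2) hDp0; positivity
  have hq3 : q ≤ 3 := by rw [hqe]; nlinarith
  have hl1 : ∑ i, |w i| = K - ε * S := by
    rw [hK, hSdef, Finset.mul_sum, ← Finset.sum_sub_distrib]
    refine Finset.sum_congr rfl fun i _ => ?_
    simp only [hw]
    have hdi := abs_le.1 (hd1 i)
    rcases lt_trichotomy (v i) 0 with h | h | h
    · have hg := hgap i h.ne
      rw [abs_of_neg h] at hg
      rw [abs_of_nonpos (by nlinarith), abs_of_neg h, sign_neg h]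
      simp; ring
    · simp [h, hd0 i h]
    · have hg := hgap i h.ne'
      rw [abs_of_pos h] at hg
      rw [abs_of_nonneg (by nlinarith), abs_of_pos h, sign_pos h]
      simp
  have hl1sq : (∑ i, |w i|) ^ 2 < K ^ 2 * q := by
    have h0 : 0 ≤ ∑ i, |w i| := Finset.sum_nonneg fun i _ => abs_nonneg _
    have h1 : ∑ i, |w i| ≤ K * (1 - ε * p) := by
      rw [hl1]; linarith [mul_le_mul_of_nonneg_left hS hε.le]
    have h2 : (∑ i, |w i|) ^ 2 ≤ (K * (1 - ε * p)) ^ 2 := pow_le_pow_left₀ h0 h1 2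
    have h3 : 0 < K ^ 2 * (ε ^ 2 * (D - p ^ 2)) := by positivity
    rw [hqe]; linarith [mul_pow K (1 - ε * p) 2]
  set r := Real.sqrt q with hr
  have hr0 : 0 < r := Real.sqrt_pos.2 hqpos
  have hrq : r ^ 2 = q := Real.sq_sqrt hqpos.le
  have hu2 : ∑ i, (w i / r) ^ 2 = 1 := by
    simp_rw [div_pow]
    rw [← Finset.sum_div, hrq, ← hq, div_self hqpos.ne']
  refine ⟨Matrix.of fun i j => a j * w i, fun i => w i / r, ?_, ?_, ?_, ?_, ?_⟩
  · intro i j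
    rw [ha, Matrix.of_apply]
    have : v i * a j - a j * w i = a j * (ε * d i) := by simp only [hw]; ring
    rw [this, abs_mul, abs_mul, abs_of_pos hε]
    have h1 := (hab j).2
    have h2 := hd1 i
    calc |a j| * (ε * |d i|) ≤ 10 * (ε * 1) := by gcongr
      _ = 10 * ε := by ring
  · rw [vecNorm_two_eq, hu2, Real.sqrt_one]
  · rw [opNorm_vmv _ hu2, opNorm_vmv _ hv2]
    simp_rw [abs_div, abs_of_pos hr0]
    rw [← Finset.sum_div, div_lt_iff₀ hr0, ← hK]
    apply lt_of_pow_lt_pow_left₀ 2 (by positivity)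
    rw [mul_pow, hrq]; exact hl1sq
  · ext i j
    have : ∑ k, w i / r * (w k / r) * (a j * w k) = w i * a j / r ^ 2 * ∑ k, w k ^ 2 := by
      rw [Finset.mul_sum]
      refine Finset.sum_congr rfl fun k _ => ?_
      field_simp
    simp only [Matrix.mul_apply, Matrix.vecMulVec_apply, Matrix.of_apply]
    rw [this, ← hq, hrq]
    field_simp
  · apply Real.le_sqrt_of_sq_le
    have hent : ∀ i j, (A - Matrix.vecMulVec (fun i => w i / r) (fun i => w i / r) * A) i j
        = a j * (v i - w i * ((1 - ε * p) / q)) := by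
      intro i j
      have : ∑ k, w i / r * (w k / r) * (v k * a j) = w i * a j / r ^ 2 * ∑ k, w k * v k := by
        rw [Finset.mul_sum]
        refine Finset.sum_congr rfl fun k _ => ?_
        field_simp
      simp only [Matrix.sub_apply, Matrix.mul_apply, Matrix.vecMulVec_apply, ha]
      rw [this, hwv, hrq]; ring
    have hperp : ∑ i, (v i - w i * ((1 - ε * p) / q)) ^ 2 = ε ^ 2 * (D - p ^ 2) / q := by
      have : ∀ t : ℝ, ∑ i, (v i - w i * t) ^ 2
          = ∑ i, v i ^ 2 - 2 * t * ∑ i, w i * v i + t ^ 2 * ∑ i, w i ^ 2 := by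
        intro t
        rw [Finset.mul_sum, Finset.mul_sum, ← Finset.sum_sub_distrib, ← Finset.sum_add_distrib]
        refine Finset.sum_congr rfl fun i _ => ?_
        ring
      rw [this, hv2, hwv, ← hq]
      field_simp
      rw [hqe]; ring
    have hfrob : frobSq (A - Matrix.vecMulVec (fun i => w i / r) (fun i => w i / r) * A)
        = (∑ j, a j ^ 2) * (ε ^ 2 * (D - p ^ 2) / q) := by
      unfold frobSq
      simp_rw [hent, mul_pow]
      rw [Finset.sum_comm]
      simp_rw [← Finset.mul_sum]
      rw [hperp, ← Finset.sum_mul]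
    rw [hfrob]
    have ha2 : (m : ℝ) / 100 ≤ ∑ j, a j ^ 2 := by
      calc (m : ℝ) / 100 = ∑ j : Fin m, (1 / 100 : ℝ) := by simp; ring
        _ ≤ _ := by
          refine Finset.sum_le_sum fun j _ => ?_
          have := (hab j).1
          rw [← sq_abs]; nlinarith
    have hq4 : ε ^ 2 * (K ^ 2 / 4) ≤ ε ^ 2 * (D - p ^ 2) / q := by
      rw [le_div_iff₀ hqpos]
      have h1 : K ^ 2 / 4 * q ≤ D - p ^ 2 := by nlinarith [sq_nonneg K]
      nlinarith [mul_le_mul_of_nonneg_left h1 (sq_nonneg ε)]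
    have hm : Real.sqrt (m : ℝ) ^ 2 = m := Real.sq_sqrt (Nat.cast_nonneg m)
    have hm0 : (0 : ℝ) ≤ m := Nat.cast_nonneg m
    calc (1 / 200 * (10 * ε) * κ * Real.sqrt m) ^ 2
        = (m : ℝ) / 100 * (ε ^ 2 * (κ ^ 2 / 4)) := by
          rw [mul_pow _ (Real.sqrt _), hm]; ring
      _ ≤ (m : ℝ) / 100 * (ε ^ 2 * (K ^ 2 / 4)) := by gcongr
      _ ≤ _ := by gcongr
end

section
/- For every q ∈ [1,2) there exist n ≥ 2 and positive semidefinite matrices M, B ∈ ℝ^{n×n} such that ‖M + B‖_q < ‖M‖_q, where ‖·‖_q denotes the entrywise ℓ_q norm of the matrix. (One may take M = I − (1/n)𝟙𝟙ᵀ and B = (1/n)𝟙𝟙ᵀ for sufficiently large n, where 𝟙 is the all-ones vector.) Hence the entrywise ℓ_q matrix norm is not monotone for q ∈ [1,2). -/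
open scoped BigOperators ENNReal
open Matrix

/-- For every `q ∈ [1,2)` there exist `n ≥ 2` and PSD matrices `M, B` with
`‖M + B‖_q < ‖M‖_q` in the entrywise `ℓ_q` matrix norm: the entrywise `ℓ_q` norm is not
monotone for `q ∈ [1,2)`. -/
theorem entrywise_lq_not_monotone (q : ℝ) (hq1 : 1 ≤ q) (hq2 : q < 2) :
    ∃ n : ℕ, 2 ≤ n ∧
      ∃ M B : Matrix (Fin n) (Fin n) ℝ, M.PosSemidef ∧ B.PosSemidef ∧
        (∑ i, ∑ j, |(M + B) i j| ^ q) ^ (1 / q) < (∑ i, ∑ j, |M i j| ^ q) ^ (1 / q) := by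
  obtain ⟨n, hn4, hn2⟩ : ∃ n : ℕ, (4 : ℝ) ≤ (n : ℝ) ^ (2 - q) ∧ 2 ≤ n := by
    have h1 := (tendsto_rpow_atTop (show 0 < 2 - q by linarith)).comp
      (tendsto_natCast_atTop_atTop (R := ℝ))
    exact ((h1.eventually_ge_atTop 4).and (Filter.eventually_ge_atTop 2)).exists
  have hnR : (2 : ℝ) ≤ n := by exact_mod_cast hn2
  have hn0 : (0 : ℝ) < n := by linarith
  have hq0 : 0 < q := by linarith
  refine ⟨n, hn2, ?_⟩
  let B : Matrix (Fin n) (Fin n) ℝ := Matrix.of fun _ _ => (n : ℝ)⁻¹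
  have hBH : Bᴴ = B := by ext i j; simp [B]
  have hBB : B * B = B := by
    ext i j
    simp [B, Matrix.mul_apply]
    field_simp
  have hB : B.PosSemidef := by
    have := Matrix.posSemidef_conjTranspose_mul_self B
    rwa [hBH, hBB] at this
  have hM : (1 - B).PosSemidef := by
    have := Matrix.posSemidef_conjTranspose_mul_self (1 - B)
    rwa [Matrix.conjTranspose_sub, hBH, Matrix.conjTranspose_one,
      show (1 - B) * (1 - B) = 1 - B by
        rw [mul_sub, sub_mul, sub_mul, hBB]; simp] at this
  refine ⟨1 - B, B, hM, hB, ?_⟩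
  have hinv : (n : ℝ)⁻¹ ≤ 1 := inv_le_one_of_one_le₀ (by linarith)
  have e1 : ∑ i, ∑ j, |((1 - B) + B) i j| ^ q = (n : ℝ) := by
    have : ∀ i j : Fin n, |((1 - B) + B) i j| ^ q = if i = j then 1 else 0 := by
      intro i j
      rw [sub_add_cancel, Matrix.one_apply]
      split_ifs
      · simp
      · simp [Real.zero_rpow hq0.ne']
    simp only [this]
    simp
  have e2 : ∑ i, ∑ j, |(1 - B) i j| ^ q
      = (n : ℝ) * ((1 - (n : ℝ)⁻¹) ^ q + (n - 1) * ((n : ℝ)⁻¹) ^ q) := by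
    have : ∀ i j : Fin n, |(1 - B) i j| ^ q = ((n : ℝ)⁻¹) ^ q +
        if i = j then (1 - (n : ℝ)⁻¹) ^ q - ((n : ℝ)⁻¹) ^ q else 0 := by
      intro i j
      rw [Matrix.sub_apply, Matrix.one_apply]
      split_ifs
      · simp only [B, Matrix.of_apply]
        rw [abs_of_nonneg (by linarith)]; ring
      · simp only [B, Matrix.of_apply]
        rw [zero_sub, abs_neg, abs_of_pos (by positivity)]; ring
    simp only [this, Finset.sum_add_distrib]
    simp
    ring
  have b : 1 + q * (-(n : ℝ)⁻¹) ≤ (1 + -(n : ℝ)⁻¹) ^ q :=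
    one_add_mul_self_le_rpow_one_add (by linarith) hq1
  have hp : ((n : ℝ)⁻¹) ^ q = (n : ℝ) ^ (2 - q) * ((n : ℝ)⁻¹) ^ 2 := by
    rw [Real.inv_rpow hn0.le, Real.rpow_sub hn0]
    norm_num
    field_simp
  have key : 2 * (n : ℝ)⁻¹ ≤ (n - 1) * ((n : ℝ)⁻¹) ^ q := by
    rw [hp]
    calc 2 * (n : ℝ)⁻¹ = (n / 2) * (4 * ((n : ℝ)⁻¹) ^ 2) := by field_simp; norm_num
      _ ≤ _ := by gcongr <;> linarith
  have hlt : q * (n : ℝ)⁻¹ < 2 * (n : ℝ)⁻¹ := by gcongr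
  apply Real.rpow_lt_rpow
  · rw [e1]; exact hn0.le
  · rw [e1, e2]
    have : 1 < (1 - (n : ℝ)⁻¹) ^ q + (n - 1) * ((n : ℝ)⁻¹) ^ q := by
      rw [← sub_eq_add_neg] at b
      linarith
    nlinarith
  · positivity
end

section
/- There exist n ≥ 3 and positive semidefinite matrices M, B ∈ ℝ^{n×n}, with B of rank one, such that ‖M + B‖_{∞→2} < ‖M‖_{∞→2}. (One may take n divisible by 3, A = diag(u) with u having n/3 entries equal to 2 and 2n/3 entries equal to 1, B = (1/n)𝟙𝟙ᵀ, and M = A − B, where 𝟙 is the all-ones vector.) Hence the (∞→2) operator norm is not monotone. -/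
open scoped BigOperators ENNReal
open Matrix

lemma vecNorm_two_eq_s13 (v : Fin 3 → ℝ) :
    vecNorm 2 v = Real.sqrt (v 0 ^ 2 + v 1 ^ 2 + v 2 ^ 2) := by
  unfold vecNorm
  rw [if_neg (by simp), Real.sqrt_eq_rpow]
  simp [Fin.sum_univ_three]

lemma abs_le_of_vecNorm_top (x : Fin 3 → ℝ) (h : vecNorm ⊤ x ≤ 1) (i : Fin 3) :
    -1 ≤ x i ∧ x i ≤ 1 := by
  unfold vecNorm at h
  rw [if_pos rfl] at h
  exact abs_le.mp ((le_ciSup (f := fun i => |x i|) (Set.finite_range _).bddAbove i).trans h)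

/-- There exist `n ≥ 3` and PSD matrices `M, B` with `B` of rank one such that
`‖M + B‖_{∞→2} < ‖M‖_{∞→2}`: the `∞→2` operator norm is not monotone. -/
theorem infty_two_norm_not_monotone :
    ∃ n : ℕ, 3 ≤ n ∧
      ∃ M B : Matrix (Fin n) (Fin n) ℝ, M.PosSemidef ∧ B.PosSemidef ∧ B.rank = 1 ∧
        opNorm ⊤ 2 (M + B) < opNorm ⊤ 2 M := by
  refine ⟨3, le_rfl, !![5/3, -1/3, -1/3; -1/3, 2/3, -1/3; -1/3, -1/3, 2/3],
    !![1/3, 1/3, 1/3; 1/3, 1/3, 1/3; 1/3, 1/3, 1/3], ?_, ?_, ?_, ?_⟩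
  · refine Matrix.PosSemidef.of_dotProduct_mulVec_nonneg ?_ ?_
    · ext i j
      fin_cases i <;> fin_cases j <;> simp
    · intro x
      simp [Matrix.mulVec, dotProduct, Fin.sum_univ_three]
      nlinarith [sq_nonneg (x 0 - x 1), sq_nonneg (x 0 - x 2), sq_nonneg (x 1 - x 2),
        sq_nonneg (x 0)]
  · refine Matrix.PosSemidef.of_dotProduct_mulVec_nonneg ?_ ?_
    · ext i j
      fin_cases i <;> fin_cases j <;> simp
    · intro x
      simp [Matrix.mulVec, dotProduct, Fin.sum_univ_three]
      nlinarith [sq_nonneg (x 0 + x 1 + x 2)]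
  · apply le_antisymm
    · have h : (!![1/3, 1/3, 1/3; 1/3, 1/3, 1/3; 1/3, 1/3, 1/3] : Matrix (Fin 3) (Fin 3) ℝ)
          = vecMulVec (fun _ => 1/3) (fun _ => 1) := by
        ext i j
        fin_cases i <;> fin_cases j <;> simp [vecMulVec]
      rw [h]
      exact rank_vecMulVec_le _ _
    · rw [Nat.one_le_iff_ne_zero]
      intro h
      rw [Matrix.rank, Submodule.finrank_eq_zero, LinearMap.range_eq_bot] at h
      have := congrFun (LinearMap.congr_fun h ![1, 0, 0]) 0
      simp [Matrix.mulVec, dotProduct, Fin.sum_univ_three] at this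
  · have h1 : opNorm ⊤ 2 ((!![5/3, -1/3, -1/3; -1/3, 2/3, -1/3; -1/3, -1/3, 2/3] :
        Matrix (Fin 3) (Fin 3) ℝ) + !![1/3, 1/3, 1/3; 1/3, 1/3, 1/3; 1/3, 1/3, 1/3])
        ≤ Real.sqrt 6 := by
      apply Real.sSup_le _ (Real.sqrt_nonneg _)
      rintro y ⟨x, hx, rfl⟩
      rw [vecNorm_two_eq_s13]
      apply Real.sqrt_le_sqrt
      obtain ⟨a0, b0⟩ := abs_le_of_vecNorm_top x hx 0
      obtain ⟨a1, b1⟩ := abs_le_of_vecNorm_top x hx 1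
      obtain ⟨a2, b2⟩ := abs_le_of_vecNorm_top x hx 2
      simp [Matrix.mulVec, dotProduct, Fin.sum_univ_three]
      ring_nf
      nlinarith
    refine h1.trans_lt (lt_of_lt_of_le (b := Real.sqrt (57/9)) ?_ ?_)
    · exact Real.sqrt_lt_sqrt (by norm_num) (by norm_num)
    · apply le_csSup
      · refine ⟨Real.sqrt 100, ?_⟩
        rintro y ⟨x, hx, rfl⟩
        rw [vecNorm_two_eq_s13]
        apply Real.sqrt_le_sqrt
        obtain ⟨a0, b0⟩ := abs_le_of_vecNorm_top x hx 0
        obtain ⟨a1, b1⟩ := abs_le_of_vecNorm_top x hx 1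
        obtain ⟨a2, b2⟩ := abs_le_of_vecNorm_top x hx 2
        simp [Matrix.mulVec, dotProduct, Fin.sum_univ_three]
        have key : ∀ t : ℝ, -3 ≤ t → t ≤ 3 → t ^ 2 ≤ 9 := fun t h h' => by nlinarith
        have e0 := key (5/3 * x 0 + -1/3 * x 1 + -1/3 * x 2) (by linarith) (by linarith)
        have e1 := key (-1/3 * x 0 + 2/3 * x 1 + -1/3 * x 2) (by linarith) (by linarith)
        have e2 := key (-1/3 * x 0 + -1/3 * x 1 + 2/3 * x 2) (by linarith) (by linarith)
        linarith
      · refine ⟨![1, -1, -1], ?_, ?_⟩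
        · unfold vecNorm
          rw [if_pos rfl]
          apply ciSup_le
          intro i
          fin_cases i <;> simp
        · rw [vecNorm_two_eq_s13]
          congr 1
          simp [Matrix.mulVec, dotProduct, Fin.sum_univ_three]
          norm_num
end

section
/- Let Σ* ∈ ℝ^{n×n} be a positive semidefinite matrix of rank r all of whose nonzero eigenvalues are at most θ_max, and let Π* be the orthogonal projection matrix onto the range of Σ* (so Π*Σ*Π* = Σ*). Let Π ∈ ℝ^{n×n} be an orthogonal projection matrix of rank r with ‖Π* − Π‖_F² ≤ ε. Then for every symmetric matrix Σ ∈ ℝ^{n×n}: ‖Σ* − ΠΣΠ‖_F² ≤ 8·θ_max²·ε + 2·‖ΠΣ*Π − ΠΣΠ‖_F². -/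
open scoped BigOperators ENNReal
open Matrix

theorem aux_frobSq_eq {n : ℕ} (M : Matrix (Fin n) (Fin n) ℝ) :
    frobSq M = ∑ i, M i ⬝ᵥ M i := by
  simp [frobSq, dotProduct, sq]

theorem aux_frobSq_transpose {n : ℕ} (M : Matrix (Fin n) (Fin n) ℝ) :
    frobSq Mᵀ = frobSq M := by
  unfold frobSq
  rw [Finset.sum_comm]
  rfl

theorem aux_frobSq_add {n : ℕ} (A B : Matrix (Fin n) (Fin n) ℝ) :
    frobSq (A + B) ≤ 2 * frobSq A + 2 * frobSq B := by
  unfold frobSq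
  simp only [Finset.mul_sum, ← Finset.sum_add_distrib]
  refine Finset.sum_le_sum fun i _ => Finset.sum_le_sum fun j _ => ?_
  simp only [Matrix.add_apply]
  nlinarith [sq_nonneg (A i j - B i j)]

theorem aux_frobSq_mul {n : ℕ} (M S : Matrix (Fin n) (Fin n) ℝ) (hS : S.IsSymm) (c : ℝ)
    (h : ∀ x : Fin n → ℝ, (S *ᵥ x) ⬝ᵥ (S *ᵥ x) ≤ c * (x ⬝ᵥ x)) :
    frobSq (M * S) ≤ c * frobSq M := by
  rw [aux_frobSq_eq, aux_frobSq_eq, Finset.mul_sum]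
  refine Finset.sum_le_sum fun i _ => ?_
  have e : (M * S) i = S *ᵥ (M i) := by
    rw [Matrix.mul_apply_eq_vecMul, ← Matrix.mulVec_transpose, hS.eq]
  rw [e]
  exact h _

theorem aux_symm_dot {n : ℕ} (S : Matrix (Fin n) (Fin n) ℝ) (hS : S.IsSymm)
    (x y : Fin n → ℝ) : (S *ᵥ x) ⬝ᵥ y = x ⬝ᵥ (S *ᵥ y) := by
  rw [Matrix.dotProduct_mulVec, ← Matrix.mulVec_transpose, hS.eq]

theorem aux_self_nonneg {n : ℕ} (x : Fin n → ℝ) : 0 ≤ x ⬝ᵥ x :=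
  Finset.sum_nonneg fun i _ => mul_self_nonneg _

theorem aux_proj {n : ℕ} (P : Matrix (Fin n) (Fin n) ℝ) (hP : P.IsSymm) (hPP : P * P = P)
    (x : Fin n → ℝ) : (P *ᵥ x) ⬝ᵥ (P *ᵥ x) ≤ 1 * (x ⬝ᵥ x) := by
  have h1 : (P *ᵥ x) ⬝ᵥ (P *ᵥ x) = x ⬝ᵥ (P *ᵥ x) := by
    rw [aux_symm_dot P hP, Matrix.mulVec_mulVec, hPP]
  have h2 := aux_self_nonneg (x - P *ᵥ x)
  have h3 := dotProduct_comm x (P *ᵥ x)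
  simp only [sub_dotProduct, dotProduct_sub] at h2
  linarith

theorem aux_psd {n : ℕ} (S : Matrix (Fin n) (Fin n) ℝ) (θ : ℝ) (hS : S.PosSemidef)
    (hT : (θ • (1 : Matrix (Fin n) (Fin n) ℝ) - S).PosSemidef)
    (x : Fin n → ℝ) : (S *ᵥ x) ⬝ᵥ (S *ᵥ x) ≤ θ ^ 2 * (x ⬝ᵥ x) := by
  have hsym : S.IsSymm := by simpa [Matrix.IsHermitian, Matrix.IsSymm] using hS.isHermitian
  have p : ∀ y : Fin n → ℝ, 0 ≤ y ⬝ᵥ (S *ᵥ y) := fun y => by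
    simpa using hS.dotProduct_mulVec_nonneg y
  have q : ∀ y : Fin n → ℝ, y ⬝ᵥ (S *ᵥ y) ≤ θ * (y ⬝ᵥ y) := fun y => by
    have := hT.dotProduct_mulVec_nonneg y
    simp only [star_trivial, Matrix.sub_mulVec, Matrix.smul_mulVec, Matrix.one_mulVec,
      dotProduct_sub, dotProduct_smul, smul_eq_mul] at this
    linarith
  have hx := aux_self_nonneg x
  rcases lt_or_ge 0 θ with h0 | h0
  · have h1 := q (S *ᵥ x)
    have h2 := p (θ • x - S *ᵥ x)
    have h3 := q x
    have e1 : x ⬝ᵥ (S *ᵥ (S *ᵥ x)) = (S *ᵥ x) ⬝ᵥ (S *ᵥ x) := (aux_symm_dot S hsym _ _).symm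
    simp only [Matrix.mulVec_sub, Matrix.mulVec_smul, sub_dotProduct, dotProduct_sub,
      smul_dotProduct, dotProduct_smul, smul_eq_mul, e1] at h2
    have h4 : 0 ≤ θ * (θ * (x ⬝ᵥ (S *ᵥ x)) - (S *ᵥ x) ⬝ᵥ (S *ᵥ x)) := by linarith
    have h5 := nonneg_of_mul_nonneg_right h4 h0
    nlinarith
  · have h1 : x ⬝ᵥ (S *ᵥ x) = 0 := le_antisymm ((q x).trans (by nlinarith)) (p x)
    have h2 : S *ᵥ x = 0 := (hS.dotProduct_mulVec_zero_iff x).1 (by simpa using h1)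
    rw [h2]
    simp only [dotProduct_zero]
    positivity

/-- Let `Σ* ⪰ 0` have rank `r` with all eigenvalues at most `θ_max`, let `Π*` be
the orthogonal projection onto its range, and let `Π` be a rank-`r` orthogonal projection with
`‖Π* − Π‖_F² ≤ ε`. Then for every symmetric `Σ`,
`‖Σ* − ΠΣΠ‖_F² ≤ 8 θ_max² ε + 2 ‖ΠΣ*Π − ΠΣΠ‖_F²`. -/
theorem recover_sigma_bound {n : ℕ} (r : ℕ) (θmax : ℝ)
    (Sstar : Matrix (Fin n) (Fin n) ℝ) (hS : Sstar.PosSemidef) (hSrank : Sstar.rank = r)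
    (hSeig : (θmax • (1 : Matrix (Fin n) (Fin n) ℝ) - Sstar).PosSemidef)
    (Pstar : Matrix (Fin n) (Fin n) ℝ) (hPstarSym : Pstar.IsSymm)
    (hPstarProj : Pstar * Pstar = Pstar)
    (hPstarRange : LinearMap.range Pstar.mulVecLin = LinearMap.range Sstar.mulVecLin)
    (P : Matrix (Fin n) (Fin n) ℝ) (hPSym : P.IsSymm) (hPProj : P * P = P)
    (hPrank : P.rank = r)
    (ε : ℝ) (hclose : frobSq (Pstar - P) ≤ ε)
    (Sig : Matrix (Fin n) (Fin n) ℝ) (hSig : Sig.IsSymm) :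
    frobSq (Sstar - P * Sig * P) ≤
      8 * θmax ^ 2 * ε + 2 * frobSq (P * Sstar * P - P * Sig * P) := by
  have hsym : Sstar.IsSymm := by simpa [Matrix.IsHermitian, Matrix.IsSymm] using hS.isHermitian
  have hQS : Pstar * Sstar = Sstar := by
    apply Matrix.ext_of_mulVec_single
    intro i
    have hm : Sstar *ᵥ Pi.single i 1 ∈ LinearMap.range Pstar.mulVecLin := by
      rw [hPstarRange]
      exact ⟨Pi.single i 1, rfl⟩
    obtain ⟨y, hy⟩ := hm
    rw [Matrix.mulVecLin_apply] at hy
    rw [← Matrix.mulVec_mulVec, ← hy, Matrix.mulVec_mulVec, hPstarProj]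
  have hSQ : Sstar * Pstar = Sstar := by
    have := congrArg Matrix.transpose hQS
    rwa [Matrix.transpose_mul, hsym.eq, hPstarSym.eq] at this
  set D := Pstar - P with hD
  have hDs : Dᵀ = D := by rw [hD, Matrix.transpose_sub, hPstarSym.eq, hPSym.eq]
  have b1 : frobSq (D * Sstar) ≤ θmax ^ 2 * frobSq D :=
    aux_frobSq_mul D Sstar hsym _ (aux_psd Sstar θmax hS hSeig)
  have b2 : frobSq (P * Sstar * D) ≤ frobSq (D * Sstar) := by
    have := aux_frobSq_mul (D * Sstar) P hPSym 1 (aux_proj P hPSym hPProj)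
    rw [← aux_frobSq_transpose (P * Sstar * D)]
    simpa [Matrix.transpose_mul, hsym.eq, hPSym.eq, hDs, Matrix.mul_assoc] using this
  have e1 : Sstar - P * Sstar * P = D * Sstar + P * Sstar * D := by
    rw [hD, Matrix.sub_mul, Matrix.mul_sub, hQS, Matrix.mul_assoc P Sstar Pstar, hSQ]
    abel
  have b3 := aux_frobSq_add (D * Sstar) (P * Sstar * D)
  rw [← e1] at b3
  have b4 := aux_frobSq_add (Sstar - P * Sstar * P) (P * Sstar * P - P * Sig * P)
  rw [sub_add_sub_cancel] at b4
  have b5 : θmax ^ 2 * frobSq D ≤ θmax ^ 2 * ε := mul_le_mul_of_nonneg_left hclose (sq_nonneg _)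
  linarith
end

section
/- Let q ∈ [2,∞] with dual exponent q* (1/q + 1/q* = 1), let r, s ≥ 1, let J ∈ ℝ^{s×r} have orthonormal columns, and let γ ∈ (0,1). Define V ∈ ℝ^{(r+s)×r} as the block matrix whose top r×r block is √(1−γ²)·I_r and whose bottom s×r block is γ·J. Then V has orthonormal columns, and the orthogonal projection VVᵀ satisfies ‖VVᵀ‖_{q→2} ≤ √(1−γ²)·r^{1/q*−1/2} + γ·s^{1/q*−1/2}. In particular, for q = ∞: ‖VVᵀ‖_{∞→2} ≤ √r + γ√s. -/
open scoped BigOperators ENNReal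
open Matrix

theorem esr_sq_le {ι : Type*} [Fintype ι] (q : ℝ≥0∞) (hq : 2 ≤ q)
    (qs : ℝ) (hqs1 : 1 ≤ qs) (hdual : 1 / q + ENNReal.ofReal (1 / qs) = 1)
    (r : ℕ) (hr : 1 ≤ r) (f : Fin r → ι) (hf : Function.Injective f)
    (x : ι → ℝ) (hx : vecNorm q x ≤ 1) :
    Real.sqrt ((x ∘ f) ⬝ᵥ (x ∘ f)) ≤ (r : ℝ) ^ (1 / qs - 1 / 2) := by
  have hr0 : (0:ℝ) < r := by exact_mod_cast hr
  have hS : (x ∘ f) ⬝ᵥ (x ∘ f) = ∑ i, |x (f i)| ^ 2 := by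
    simp [dotProduct, pow_two]
  rw [hS]
  by_cases ht : q = ⊤
  · subst ht
    have h1 : 1 / qs = 1 := by
      have : ENNReal.ofReal (1 / qs) = 1 := by simpa using hdual
      simpa using this
    rw [h1, show (1:ℝ) - 1/2 = 1/2 by norm_num, ← Real.sqrt_eq_rpow]
    apply Real.sqrt_le_sqrt
    have hb : ∀ i, |x i| ≤ 1 := fun i => by
      have hx' : (⨆ i, |x i|) ≤ 1 := by simpa [vecNorm] using hx
      exact (le_ciSup (f := fun i => |x i|) (Set.finite_range _).bddAbove i).trans hx'
    calc ∑ i, |x (f i)| ^ 2 ≤ ∑ i : Fin r, (1:ℝ) :=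
          Finset.sum_le_sum fun i _ => pow_le_one₀ (abs_nonneg _) (hb _)
      _ = r := by simp
  · set p := q.toReal with hp
    have hp2 : 2 ≤ p := by
      have := ENNReal.toReal_mono ht hq
      simpa using this
    have hp0 : 0 < p := by linarith
    have hd : 1 / p + 1 / qs = 1 := by
      have h := congrArg ENNReal.toReal hdual
      rw [ENNReal.toReal_add (by
        simp only [one_div, ne_eq, ENNReal.inv_eq_top]
        intro h0; simp [h0] at hq) ENNReal.ofReal_ne_top,
        ENNReal.toReal_ofReal (by positivity)] at h
      simpa using h
    have hx1 : ∑ i, |x i| ^ p ≤ 1 := by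
      have h0 : (∑ i, |x i| ^ p) ^ (1/p) ≤ 1 := by simpa only [vecNorm, ht, if_false] using hx
      have hn : 0 ≤ ∑ i, |x i| ^ p := Finset.sum_nonneg fun i _ => by positivity
      by_contra hc
      push Not at hc
      exact absurd (Real.one_lt_rpow hc (by positivity : 0 < 1/p)) (not_lt.mpr h0)
    have hx2 : ∑ i, |x (f i)| ^ p ≤ 1 := by
      refine le_trans ?_ hx1
      classical
      rw [← Finset.sum_image (s := Finset.univ) (g := f) (f := fun i => |x i| ^ p)
        (fun a _ b _ h => hf h)]
      exact Finset.sum_le_sum_of_subset_of_nonneg (Finset.subset_univ _)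
        fun i _ _ => by positivity
    have hm := Real.rpow_sum_le_const_mul_sum_rpow (Finset.univ : Finset (Fin r))
      (fun i => |x (f i)| ^ 2) (p := p/2) (by linarith)
    have he : ∀ i, |(|x (f i)| ^ 2)| ^ (p/2) = |x (f i)| ^ p := fun i => by
      rw [abs_of_nonneg (by positivity), ← Real.rpow_natCast, ← Real.rpow_mul (abs_nonneg _)]
      congr 1
      push_cast; ring
    simp only [he, Finset.card_univ, Fintype.card_fin] at hm
    have hab : ∀ i, |(|x (f i)| ^ 2)| = |x (f i)| ^ 2 := fun i => abs_of_nonneg (by positivity)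
    simp only [hab] at hm
    set S := ∑ i, |x (f i)| ^ 2 with hSd
    have hS0 : 0 ≤ S := Finset.sum_nonneg fun i _ => by positivity
    have hm2 : S ^ (p/2) ≤ (r:ℝ) ^ (p/2 - 1) :=
      hm.trans (mul_le_of_le_one_right (by positivity) hx2)
    have hm3 := Real.rpow_le_rpow (by positivity) hm2 (by positivity : 0 ≤ 1/p)
    rw [← Real.rpow_mul hS0, ← Real.rpow_mul hr0.le] at hm3
    rw [Real.sqrt_eq_rpow]
    convert hm3 using 2
    · field_simp
    · have : 1/qs = 1 - 1/p := by linarith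
      rw [this]; field_simp; ring

theorem esr_iso {m n : Type*} [Fintype m] [Fintype n] [DecidableEq n] (V : Matrix m n ℝ)
    (hV : Vᵀ * V = 1) (y : n → ℝ) : (V *ᵥ y) ⬝ᵥ (V *ᵥ y) = y ⬝ᵥ y := by
  rw [dotProduct_mulVec, vecMul_mulVec, hV, vecMul_one]

theorem esr_contr {m n : Type*} [Fintype m] [Fintype n] [DecidableEq n] (V : Matrix m n ℝ)
    (hV : Vᵀ * V = 1) (z : m → ℝ) : (Vᵀ *ᵥ z) ⬝ᵥ (Vᵀ *ᵥ z) ≤ z ⬝ᵥ z := by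
  set w := Vᵀ *ᵥ z with hw
  have h0 : 0 ≤ (z - V *ᵥ w) ⬝ᵥ (z - V *ᵥ w) :=
    Finset.sum_nonneg fun i _ => mul_self_nonneg _
  have h1 : z ⬝ᵥ (V *ᵥ w) = w ⬝ᵥ w := by
    rw [dotProduct_mulVec, ← mulVec_transpose]
  have h2 := esr_iso V hV w
  rw [sub_dotProduct, dotProduct_sub, dotProduct_sub, h2, dotProduct_comm (V *ᵥ w) z, h1] at h0
  linarith

theorem esr_norm {n : Type*} [Fintype n] (v : n → ℝ) :
    Real.sqrt (v ⬝ᵥ v) = ‖(WithLp.toLp 2 v : EuclideanSpace ℝ n)‖ := by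
  rw [EuclideanSpace.norm_eq]
  simp [dotProduct, pow_two]

theorem esr_vecNorm {n : Type*} [Fintype n] (v : n → ℝ) :
    vecNorm 2 v = Real.sqrt (v ⬝ᵥ v) := by
  simp [vecNorm, Real.sqrt_eq_rpow, dotProduct, pow_two]

theorem esr_orth {m n : Type*} [Fintype m] [DecidableEq n] (V : Matrix m n ℝ) :
    (∀ a b, (∑ i, V i a * V i b) = if a = b then 1 else 0) ↔ Vᵀ * V = 1 := by
  simp [← Matrix.ext_iff, mul_apply, one_apply]

/-- For `q ∈ [2,∞]` with dual exponent `q*`, an `s×r` matrix `J` with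
orthonormal columns and `γ ∈ (0,1)`, the block matrix `V = [√(1−γ²)·I_r ; γ·J]` has orthonormal
columns and `‖VVᵀ‖_{q→2} ≤ √(1−γ²)·r^(1/q*−1/2) + γ·s^(1/q*−1/2)`; in particular for `q = ∞`,
`‖VVᵀ‖_{∞→2} ≤ √r + γ√s`. -/
theorem embedded_subspace_robustness (q : ℝ≥0∞) (hq : 2 ≤ q)
    (qs : ℝ) (hqs1 : 1 ≤ qs) (hqs2 : qs ≤ 2)
    (hdual : 1 / q + ENNReal.ofReal (1 / qs) = 1)
    (r s : ℕ) (hr : 1 ≤ r) (hs : 1 ≤ s)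
    (J : Matrix (Fin s) (Fin r) ℝ)
    (hJ : ∀ a b, (∑ i, J i a * J i b) = if a = b then 1 else 0)
    (γ : ℝ) (hγ0 : 0 < γ) (hγ1 : γ < 1) :
    ∀ V : Matrix (Fin r ⊕ Fin s) (Fin r) ℝ,
      V = Matrix.fromRows (Real.sqrt (1 - γ ^ 2) • (1 : Matrix (Fin r) (Fin r) ℝ)) (γ • J) →
      (∀ a b, (∑ i, V i a * V i b) = if a = b then 1 else 0) ∧
      opNorm q 2 (V * Vᵀ) ≤
        Real.sqrt (1 - γ ^ 2) * (r : ℝ) ^ (1 / qs - 1 / 2) +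
          γ * (s : ℝ) ^ (1 / qs - 1 / 2) ∧
      (q = ⊤ → opNorm ⊤ 2 (V * Vᵀ) ≤ Real.sqrt r + γ * Real.sqrt s) := by
  intro V hVd
  set c := Real.sqrt (1 - γ ^ 2) with hc
  have hc0 : 0 ≤ c := Real.sqrt_nonneg _
  have hc2 : c ^ 2 = 1 - γ ^ 2 := Real.sq_sqrt (by nlinarith)
  have hJ' := (esr_orth J).1 hJ
  have hV' : ∀ a b, (∑ i, V i a * V i b) = if a = b then 1 else 0 := by
    intro a b
    have h2 : ∑ i, γ * J i a * (γ * J i b) = γ ^ 2 * if a = b then 1 else 0 := by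
      rw [← hJ, Finset.mul_sum]
      exact Finset.sum_congr rfl fun i _ => by ring
    have h1 : ∑ i, c * (1 : Matrix (Fin r) (Fin r) ℝ) i a * (c * (1 : Matrix (Fin r) (Fin r) ℝ) i b)
        = c ^ 2 * if a = b then 1 else 0 := by
      simp [one_apply, eq_comm, pow_two]
    subst hVd
    rw [Fintype.sum_sum_type]
    simp only [fromRows_apply_inl, fromRows_apply_inr, Matrix.smul_apply, smul_eq_mul]
    rw [h1, h2, hc2]
    ring
  have hVV := (esr_orth V).1 hV'
  have hmain : opNorm q 2 (V * Vᵀ) ≤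
        c * (r : ℝ) ^ (1 / qs - 1 / 2) + γ * (s : ℝ) ^ (1 / qs - 1 / 2) := by
    apply Real.sSup_le
    · rintro y ⟨x, hx, rfl⟩
      have hA := esr_sq_le q hq qs hqs1 hdual r hr Sum.inl Sum.inl_injective x hx
      have hB := esr_sq_le q hq qs hqs1 hdual s hs Sum.inr Sum.inr_injective x hx
      rw [esr_vecNorm, ← mulVec_mulVec, esr_iso V hVV, esr_norm]
      have hy : Vᵀ *ᵥ x = c • (x ∘ Sum.inl) + γ • (Jᵀ *ᵥ (x ∘ Sum.inr)) := by
        subst hVd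
        rw [transpose_fromRows, fromCols_mulVec]
        simp [smul_mulVec]
      rw [hy, WithLp.toLp_add, WithLp.toLp_smul, WithLp.toLp_smul]
      refine (norm_add_le _ _).trans ?_
      rw [norm_smul, norm_smul, Real.norm_of_nonneg hc0, Real.norm_of_nonneg hγ0.le,
        ← esr_norm, ← esr_norm]
      have hD := Real.sqrt_le_sqrt (esr_contr J hJ' (x ∘ Sum.inr))
      gcongr
      exact hD.trans hB
    · positivity
  refine ⟨hV', hmain, ?_⟩
  intro hqt
  subst hqt
  have h1 : 1 / qs = 1 := by
    have : ENNReal.ofReal (1 / qs) = 1 := by simpa using hdual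
    simpa using this
  rw [h1, show (1:ℝ) - 1/2 = 1/2 by norm_num, ← Real.sqrt_eq_rpow, ← Real.sqrt_eq_rpow] at hmain
  refine hmain.trans ?_
  have : c ≤ 1 := by nlinarith
  have := mul_le_of_le_one_left (Real.sqrt_nonneg (r:ℝ)) this
  linarith
end

section
/- Let q ∈ [2,∞] with dual exponent q*, let δ ≥ 0, κ₁, κ₂ ≥ 1 and κ := κ₁ + κ₂. Let A, Ã ∈ ℝ^{n×m} satisfy ‖A_j − Ã_j‖_q ≤ δ for every column j ∈ [m]. Let v, u ∈ ℝⁿ be unit vectors with ‖v‖_{q*} ≤ κ₁ and ‖u‖_{q*} ≤ κ₂, and set Π₁ := vvᵀ, Π₂ := uuᵀ. Suppose ‖A − Π₁A‖ ≤ ε₁‖A‖ and ‖Ã − Π₂Ã‖ ≤ ε₂‖A‖ (spectral norms), and let ε := ε₁ + ε₂ ∈ (0,1]. Then ‖A − Π₂A‖ ≤ 8(ε + √ε)·‖A‖ + 8κδ√m/√ε, and likewise ‖Ã − Π₁Ã‖ ≤ 8(ε + √ε)·‖A‖ + 8κδ√m/√ε. -/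
open scoped BigOperators ENNReal
open Matrix

lemma vecNorm_two_s16 {ι : Type*} [Fintype ι] (x : ι → ℝ) :
    vecNorm 2 x = ‖(WithLp.toLp 2 x : EuclideanSpace ℝ ι)‖ := by
  rw [EuclideanSpace.norm_eq]
  simp [vecNorm, Real.sqrt_eq_rpow]

lemma bdd_opNorm {n m : ℕ} (M : Matrix (Fin n) (Fin m) ℝ) :
    BddAbove {y : ℝ | ∃ x : Fin m → ℝ, vecNorm 2 x ≤ 1 ∧ y = vecNorm 2 (M.mulVec x)} := by
  refine ⟨‖LinearMap.toContinuousLinearMap (Matrix.toEuclideanLin M)‖, ?_⟩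
  rintro y ⟨x, hx, rfl⟩
  rw [vecNorm_two_s16] at *
  have h := (LinearMap.toContinuousLinearMap (Matrix.toEuclideanLin M)).le_opNorm (WithLp.toLp 2 x)
  have h2 : (LinearMap.toContinuousLinearMap (Matrix.toEuclideanLin M)) (WithLp.toLp 2 x)
      = WithLp.toLp 2 (M.mulVec x) := by
    simp [Matrix.toLpLin_toLp]
  rw [h2] at h
  exact h.trans (mul_le_of_le_one_right (norm_nonneg _) hx)

lemma le_opNorm2 {n m : ℕ} (M : Matrix (Fin n) (Fin m) ℝ) (x : Fin m → ℝ)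
    (hx : vecNorm 2 x ≤ 1) : ‖(WithLp.toLp 2 (M.mulVec x) : EuclideanSpace ℝ (Fin n))‖
      ≤ opNorm 2 2 M := by
  rw [← vecNorm_two_s16]
  exact le_csSup (bdd_opNorm M) ⟨x, hx, rfl⟩

lemma opNorm2_le {n m : ℕ} (M : Matrix (Fin n) (Fin m) ℝ) (B : ℝ)
    (h : ∀ x : Fin m → ℝ, vecNorm 2 x ≤ 1 →
      ‖(WithLp.toLp 2 (M.mulVec x) : EuclideanSpace ℝ (Fin n))‖ ≤ B) : opNorm 2 2 M ≤ B := by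
  apply csSup_le
  · refine ⟨_, 0, ?_, rfl⟩
    rw [vecNorm_two_s16]; simp
  · rintro y ⟨x, hx, rfl⟩
    rw [vecNorm_two_s16]; exact h x hx

lemma proj_le {F : Type*} [NormedAddCommGroup F] [InnerProductSpace ℝ F] (u y : F)
    (hu : ‖u‖ = 1) : ‖y - inner ℝ u y • u‖ ^ 2 = ‖y‖ ^ 2 - (inner ℝ u y) ^ 2 := by
  rw [norm_sub_sq_real, inner_smul_right, norm_smul, hu, real_inner_comm]
  simp
  ring

set_option maxHeartbeats 1000000 in
lemma vec_core {F : Type*} [NormedAddCommGroup F] [InnerProductSpace ℝ F] (y z u v : F)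
    (hu : ‖u‖ = 1) (hv : ‖v‖ = 1) (r₁ r₂ M k₁ k₂ ε : ℝ)
    (h₁ : ‖y - inner ℝ v y • v‖ ≤ r₁) (h₂ : ‖z - inner ℝ u z • u‖ ≤ r₂)
    (hy : ‖y‖ ≤ M) (hk₁ : |inner ℝ v (y - z)| ≤ k₁) (hk₂ : |inner ℝ u (y - z)| ≤ k₂)
    (hε : 0 < ε) (hε1 : ε ≤ 1) (hr : r₁ + r₂ ≤ ε * M) :
    ‖y - inner ℝ u y • u‖ ≤ 8 * (ε + √ε) * M + 8 * (k₁ + k₂) / √ε ∧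
    ‖z - inner ℝ v z • v‖ ≤ 8 * (ε + √ε) * M + 8 * (k₁ + k₂) / √ε := by
  have plen : ∀ w y : F, ‖w‖ = 1 → ‖y - inner ℝ w y • w‖ ≤ ‖y‖ := by
    intro w y hw
    have := proj_le w y hw
    nlinarith [norm_nonneg y, norm_nonneg (y - inner ℝ w y • w), sq_nonneg (inner ℝ w y)]
  have pin : ∀ w y : F, ‖w‖ = 1 → |inner ℝ w y| ≤ ‖y‖ := by
    intro w y hw
    have := abs_real_inner_le_norm w y
    rwa [hw, one_mul] at this
  set c : ℝ := inner ℝ u v with hc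
  have hc' : inner ℝ v u = c := by rw [hc, real_inner_comm]
  set a : ℝ := inner ℝ v y with ha
  set b : ℝ := inner ℝ u z with hb
  set R₁ := y - a • v with hR₁
  set R₂ := z - b • u with hR₂
  have hyR : y = a • v + R₁ := by rw [hR₁]; abel
  have hzR : z = b • u + R₂ := by rw [hR₂]; abel
  set s := ‖v - c • u‖ with hs
  have hs2 : s ^ 2 = 1 - c ^ 2 := by rw [hs, hc, proj_le u v hu, hv]; norm_num
  have hs' : ‖u - c • v‖ = s := by
    have h := proj_le v u hv
    rw [hc', hu] at h
    rw [← sq_eq_sq₀ (norm_nonneg _) (norm_nonneg _), h, hs2]; norm_num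
  have hs0 : 0 ≤ s := norm_nonneg _
  have hc1 : |c| ≤ 1 := by simpa [hv] using pin u v hu
  have hs1 : s ≤ 1 := by nlinarith [sq_nonneg c]
  -- relations
  have ivz : inner ℝ v z = b * c + inner ℝ v R₂ := by
    have h := congrArg (fun t => inner ℝ v t) hzR
    simp only [inner_add_right, inner_smul_right, hc'] at h
    exact h
  have iuy : inner ℝ u y = a * c + inner ℝ u R₁ := by
    have h := congrArg (fun t => inner ℝ u t) hyR
    simp only [inner_add_right, inner_smul_right, ← hc] at h
    exact h
  have ea : a = c * b + inner ℝ v R₂ + inner ℝ v (y - z) := by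
    have h := inner_sub_right (𝕜 := ℝ) v y z
    rw [ivz, ← ha] at h
    linarith
  have eb : b = c * a + inner ℝ u R₁ - inner ℝ u (y - z) := by
    have h := inner_sub_right (𝕜 := ℝ) u y z
    rw [iuy, ← hb] at h
    linarith
  clear_value R₁ R₂ a b s c
  have i1 := (pin u R₁ hu).trans h₁
  have i2 := (pin v R₂ hv).trans h₂
  have hr1 : 0 ≤ r₁ := (norm_nonneg _).trans h₁
  have hr2 : 0 ≤ r₂ := (norm_nonneg _).trans h₂
  have hk1 : 0 ≤ k₁ := (abs_nonneg _).trans hk₁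
  have hk2 : 0 ≤ k₂ := (abs_nonneg _).trans hk₂
  have hM : 0 ≤ M := (norm_nonneg _).trans hy
  have ia : |a| ≤ |c| * |b| + r₂ + k₁ := by
    calc |a| ≤ |c * b| + |inner ℝ v R₂| + |inner ℝ v (y - z)| := by
          conv_lhs => rw [ea]
          exact abs_add_three _ _ _
      _ ≤ _ := by rw [abs_mul]; linarith
  have ib : |b| ≤ |c| * |a| + r₁ + k₂ := by
    calc |b| ≤ |c * a| + |inner ℝ u R₁| + |inner ℝ u (y - z)| := by
          conv_lhs => rw [eb, sub_eq_add_neg]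
          refine (abs_add_three _ _ _).trans ?_
          rw [abs_neg]
      _ ≤ _ := by rw [abs_mul]; linarith
  have iaM : |a| ≤ M := by rw [ha]; exact (pin v y hv).trans hy
  have key : s ^ 2 * |a| ≤ ε * M + (k₁ + k₂) := by
    rw [hs2, ← sq_abs c]
    have h3 := mul_le_mul_of_nonneg_left ib (abs_nonneg c)
    have h4 : |c| * (r₁ + k₂) ≤ r₁ + k₂ := mul_le_of_le_one_left (by linarith) hc1
    nlinarith
  have hq0 : 0 < √ε := Real.sqrt_pos.2 hε
  have hqq : √ε * √ε = ε := Real.mul_self_sqrt hε.le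
  have hq1 : √ε ≤ 1 := Real.sqrt_le_iff.2 ⟨zero_le_one, by linarith⟩
  have hdiv : k₁ + k₂ ≤ (k₁ + k₂) / √ε := by
    rw [le_div_iff₀ hq0]; exact mul_le_of_le_one_right (by linarith) hq1
  have hsa : s * |a| ≤ √ε * M + (k₁ + k₂) / √ε := by
    rcases le_total s (√ε) with h | h
    · have := mul_le_mul h iaM (abs_nonneg _) hq0.le
      linarith
    · have e1 : √ε * M + (k₁ + k₂) / √ε = (ε * M + (k₁ + k₂)) / √ε := by
        rw [eq_div_iff hq0.ne', add_mul, div_mul_cancel₀ _ hq0.ne']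
        linear_combination M * hqq
      rw [e1, le_div_iff₀ hq0]
      have h7 := mul_le_mul_of_nonneg_left h (mul_nonneg hs0 (abs_nonneg a))
      have h8 : s * |a| * s = s ^ 2 * |a| := by ring
      linarith
  have hsb : s * |b| ≤ s * |a| + ε * M + (k₁ + k₂) := by
    have h3 : |b| ≤ |a| + r₁ + k₂ := by
      have := mul_le_of_le_one_left (abs_nonneg a) hc1
      linarith
    have h4 := mul_le_mul_of_nonneg_left h3 hs0
    have h5 : s * (r₁ + k₂) ≤ r₁ + k₂ := mul_le_of_le_one_left (by linarith) hs1
    have h6 : s * (|a| + r₁ + k₂) = s * |a| + s * (r₁ + k₂) := by ring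
    linarith
  have hεM : 0 ≤ ε * M := by positivity
  have hqM : 0 ≤ √ε * M := by positivity
  have f1 : ‖y - inner ℝ u y • u‖ ≤ s * |a| + r₁ := by
    have : y - inner ℝ u y • u = a • (v - c • u) + (R₁ - inner ℝ u R₁ • u) := by
      rw [iuy]
      conv_lhs => rw [hyR]
      module
    rw [this]
    refine (norm_add_le _ _).trans ?_
    rw [norm_smul, Real.norm_eq_abs, ← hs]
    linarith [plen u R₁ hu]
  have f2 : ‖z - inner ℝ v z • v‖ ≤ s * |b| + r₂ := by
    have : z - inner ℝ v z • v = b • (u - c • v) + (R₂ - inner ℝ v R₂ • v) := by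
      rw [ivz]
      conv_lhs => rw [hzR]
      module
    rw [this]
    refine (norm_add_le _ _).trans ?_
    rw [norm_smul, Real.norm_eq_abs, hs']
    linarith [plen v R₂ hv]
  have e8 : 8 * (k₁ + k₂) / √ε = 8 * ((k₁ + k₂) / √ε) := by ring
  rw [e8]
  have e9 : 8 * (ε + √ε) * M = 8 * (ε * M) + 8 * (√ε * M) := by ring
  rw [e9]
  constructor <;> linarith

lemma holder_vec {n : ℕ} (q : ℝ≥0∞) (hq : 2 ≤ q)
    (qs : ℝ) (hqs1 : 1 ≤ qs)
    (hdual : 1 / q + ENNReal.ofReal (1 / qs) = 1) (v e : Fin n → ℝ) (κ δ : ℝ)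
    (hv : vecNorm (ENNReal.ofReal qs) v ≤ κ) (he : vecNorm q e ≤ δ) (hδ : 0 ≤ δ) :
    |∑ i, v i * e i| ≤ κ * δ := by
  have hqs0 : 0 < qs := by linarith
  have habs : |∑ i, v i * e i| ≤ ∑ i, |v i| * |e i| := by
    refine (Finset.abs_sum_le_sum_abs _ _).trans (le_of_eq ?_)
    simp [abs_mul]
  refine habs.trans ?_
  have hvN : vecNorm (ENNReal.ofReal qs) v = (∑ i, |v i| ^ qs) ^ (1 / qs) := by
    simp [vecNorm, ENNReal.toReal_ofReal hqs0.le]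
  rw [hvN] at hv
  by_cases htop : q = ⊤
  · subst htop
    have h1 : qs = 1 := by
      simp only [one_div, ENNReal.inv_top, zero_add] at hdual
      have : qs⁻¹ = 1 := by simpa using hdual
      simpa using this
    subst h1
    simp only [vecNorm, if_true] at he
    have hei : ∀ i, |e i| ≤ δ := fun i => (le_ciSup (Set.finite_range _).bddAbove i).trans he
    simp only [Real.rpow_one, div_one] at hv
    calc ∑ i, |v i| * |e i| ≤ ∑ i, |v i| * δ :=
          Finset.sum_le_sum fun i _ => mul_le_mul_of_nonneg_left (hei i) (abs_nonneg _)
      _ = (∑ i, |v i|) * δ := by rw [Finset.sum_mul]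
      _ ≤ κ * δ := mul_le_mul_of_nonneg_right hv hδ
  · have hq2 : 2 ≤ q.toReal := by
      have := ENNReal.toReal_mono htop hq
      simpa using this
    have hd : 1 / q.toReal + 1 / qs = 1 := by
      have hne : q ≠ 0 := by rintro rfl; simp at hq
      have := congrArg ENNReal.toReal hdual
      rw [ENNReal.toReal_add (by simp [hne]) (by simp),
        ENNReal.toReal_ofReal (by positivity)] at this
      simpa using this
    have hconj : qs.HolderConjugate q.toReal := by
      rw [Real.holderConjugate_iff]
      refine ⟨?_, by simp only [one_div] at hd; linarith⟩
      have : 0 < 1 / q.toReal := by positivity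
      have h3 : 1 / qs < 1 := by linarith
      rw [div_lt_one hqs0] at h3
      exact h3
    have := Real.inner_le_Lp_mul_Lq Finset.univ (fun i => |v i|) (fun i => |e i|) hconj
    simp only [abs_abs] at this
    simp only [vecNorm, htop, if_false] at he
    refine this.trans ?_
    exact mul_le_mul hv he (by positivity) (le_trans (by positivity) hv)

lemma col_bound {n m : ℕ} (E : Matrix (Fin n) (Fin m) ℝ) (v : Fin n → ℝ) (K : ℝ)
    (hK : 0 ≤ K) (h : ∀ j, |∑ i, v i * E i j| ≤ K) (x : Fin m → ℝ) (hx : vecNorm 2 x ≤ 1) :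
    |∑ i, v i * (E.mulVec x) i| ≤ K * √m := by
  have e : ∑ i, v i * (E.mulVec x) i = ∑ j, (∑ i, v i * E i j) * x j := by
    simp only [Matrix.mulVec, dotProduct, Finset.mul_sum, Finset.sum_mul]
    rw [Finset.sum_comm]
    simp only [mul_assoc]
  have hx2 : ∑ j, |x j| ^ 2 ≤ 1 := by
    rw [vecNorm_two_s16, EuclideanSpace.norm_eq, Real.sqrt_le_iff] at hx
    simpa using hx.2
  have hs : ∑ j, |x j| ≤ √m := by
    apply Real.le_sqrt_of_sq_le
    have := sq_sum_le_card_mul_sum_sq (s := Finset.univ) (f := fun j => |x j|)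
    simp only [Finset.card_univ, Fintype.card_fin] at this
    exact this.trans (mul_le_of_le_one_right (by positivity) hx2)
  rw [e]
  calc |∑ j, (∑ i, v i * E i j) * x j| ≤ ∑ j, |(∑ i, v i * E i j) * x j| :=
        Finset.abs_sum_le_sum_abs _ _
    _ ≤ ∑ j, K * |x j| := Finset.sum_le_sum fun j _ => by
        rw [abs_mul]; exact mul_le_mul_of_nonneg_right (h j) (abs_nonneg _)
    _ = K * ∑ j, |x j| := by rw [Finset.mul_sum]
    _ ≤ K * √m := mul_le_mul_of_nonneg_left hs hK

lemma inner_toLp {n : ℕ} (v w : Fin n → ℝ) :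
    inner ℝ (WithLp.toLp 2 v : EuclideanSpace ℝ (Fin n)) (WithLp.toLp 2 w) = ∑ i, v i * w i := by
  simp [PiLp.inner_apply, mul_comm]

lemma proj_mulVec {n m : ℕ} (A : Matrix (Fin n) (Fin m) ℝ) (v : Fin n → ℝ) (x : Fin m → ℝ) :
    (WithLp.toLp 2 ((A - Matrix.vecMulVec v v * A).mulVec x) : EuclideanSpace ℝ (Fin n)) =
      WithLp.toLp 2 (A.mulVec x) -
        inner ℝ (WithLp.toLp 2 v : EuclideanSpace ℝ (Fin n)) (WithLp.toLp 2 (A.mulVec x)) •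
          (WithLp.toLp 2 v : EuclideanSpace ℝ (Fin n)) := by
  rw [inner_toLp, Matrix.sub_mulVec, ← Matrix.mulVec_mulVec]
  generalize A.mulVec x = w
  ext i
  simp only [Matrix.mulVec, Matrix.vecMulVec_apply, dotProduct, PiLp.sub_apply, PiLp.smul_apply,
    Pi.sub_apply, smul_eq_mul, Finset.sum_mul]
  congr 1
  exact Finset.sum_congr rfl fun j _ => by ring

/-- Rank-one identifiability under adversarial column perturbations: with
`Π₁ = vvᵀ`, `Π₂ = uuᵀ` for unit vectors of bounded `ℓ_{q*}` norm, columnwise `δ`-closeness of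
`A, Ã` in `ℓ_q`, and spectral-norm errors `ε₁‖A‖, ε₂‖A‖`, setting `ε = ε₁ + ε₂ ∈ (0,1]` and
`κ = κ₁ + κ₂`, we get `‖A − Π₂A‖ ≤ 8(ε + √ε)‖A‖ + 8κδ√m/√ε`, and likewise for `‖Ã − Π₁Ã‖`. -/
theorem rank_one_identifiability {n m : ℕ} (q : ℝ≥0∞) (hq : 2 ≤ q)
    (qs : ℝ) (hqs1 : 1 ≤ qs) (hqs2 : qs ≤ 2)
    (hdual : 1 / q + ENNReal.ofReal (1 / qs) = 1)
    (δ κ₁ κ₂ : ℝ) (hδ : 0 ≤ δ) (hκ₁ : 1 ≤ κ₁) (hκ₂ : 1 ≤ κ₂)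
    (A At : Matrix (Fin n) (Fin m) ℝ)
    (hcols : ∀ j, vecNorm q (fun i => A i j - At i j) ≤ δ)
    (v u : Fin n → ℝ) (hv2 : vecNorm 2 v = 1) (hu2 : vecNorm 2 u = 1)
    (hvqs : vecNorm (ENNReal.ofReal qs) v ≤ κ₁)
    (huqs : vecNorm (ENNReal.ofReal qs) u ≤ κ₂)
    (ε₁ ε₂ ε : ℝ)
    (h₁ : opNorm 2 2 (A - Matrix.vecMulVec v v * A) ≤ ε₁ * opNorm 2 2 A)
    (h₂ : opNorm 2 2 (At - Matrix.vecMulVec u u * At) ≤ ε₂ * opNorm 2 2 A)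
    (hε : ε = ε₁ + ε₂) (hε0 : 0 < ε) (hε1 : ε ≤ 1) :
    opNorm 2 2 (A - Matrix.vecMulVec u u * A) ≤
      8 * (ε + Real.sqrt ε) * opNorm 2 2 A +
        8 * (κ₁ + κ₂) * δ * Real.sqrt m / Real.sqrt ε ∧
    opNorm 2 2 (At - Matrix.vecMulVec v v * At) ≤
      8 * (ε + Real.sqrt ε) * opNorm 2 2 A +
        8 * (κ₁ + κ₂) * δ * Real.sqrt m / Real.sqrt ε := by
  have hvn : ‖(WithLp.toLp 2 v : EuclideanSpace ℝ (Fin n))‖ = 1 := by rw [← vecNorm_two_s16, hv2]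
  have hun : ‖(WithLp.toLp 2 u : EuclideanSpace ℝ (Fin n))‖ = 1 := by rw [← vecNorm_two_s16, hu2]
  have main : ∀ x : Fin m → ℝ, vecNorm 2 x ≤ 1 → _ := fun x hx =>
    vec_core (WithLp.toLp 2 (A.mulVec x)) (WithLp.toLp 2 (At.mulVec x))
      (WithLp.toLp 2 u : EuclideanSpace ℝ (Fin n)) (WithLp.toLp 2 v) hun hvn
      (ε₁ * opNorm 2 2 A) (ε₂ * opNorm 2 2 A) (opNorm 2 2 A) (κ₁ * δ * √m) (κ₂ * δ * √m) ε
      (by rw [← proj_mulVec]; exact (le_opNorm2 _ x hx).trans h₁)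
      (by rw [← proj_mulVec]; exact (le_opNorm2 _ x hx).trans h₂)
      (le_opNorm2 _ x hx)
      (by
        rw [← WithLp.toLp_sub, ← Matrix.sub_mulVec, inner_toLp]
        exact col_bound _ _ _ (by positivity)
          (fun j => holder_vec q hq qs hqs1 hdual v _ _ _ hvqs (hcols j) hδ) x hx)
      (by
        rw [← WithLp.toLp_sub, ← Matrix.sub_mulVec, inner_toLp]
        exact col_bound _ _ _ (by positivity)
          (fun j => holder_vec q hq qs hqs1 hdual u _ _ _ huqs (hcols j) hδ) x hx)
      hε0 hε1 (by rw [hε]; exact le_of_eq (by ring))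
  have e : 8 * (κ₁ + κ₂) * δ * √m / √ε = 8 * (κ₁ * δ * √m + κ₂ * δ * √m) / √ε := by ring
  rw [e]
  constructor
  · apply opNorm2_le
    intro x hx
    rw [proj_mulVec]
    exact (main x hx).1
  · apply opNorm2_le
    intro x hx
    rw [proj_mulVec]
    exact (main x hx).2
end

section
/- Let q* ∈ [1,2], and let u, v ∈ ℝⁿ be unit vectors with ⟨u, v⟩ ≥ 0, ‖v‖_{q*} ≤ κ₁, and ‖u‖_{q*} ≤ κ₂. Let γ := ‖u − v‖₂ and suppose γ > 0. Then every unit vector z in the linear span of {u, v} satisfies ‖z‖_{q*} ≤ (2√2/γ)·(κ₁ + κ₂). -/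
open scoped BigOperators ENNReal
open Matrix

theorem vecNorm_two_sq {n : ℕ} (x : Fin n → ℝ) : vecNorm 2 x ^ 2 = ∑ i, x i * x i := by
  have h : vecNorm 2 x = Real.sqrt (∑ i, x i * x i) := by
    unfold vecNorm
    rw [if_neg (by norm_num), Real.sqrt_eq_rpow]
    simp [← pow_two]
  rw [h, Real.sq_sqrt (Finset.sum_nonneg fun i _ => mul_self_nonneg _)]

theorem vecNorm_ofReal {n : ℕ} (q : ℝ) (hq : 1 ≤ q) (x : Fin n → ℝ) :
    vecNorm (ENNReal.ofReal q) x = (∑ i, |x i| ^ q) ^ (1 / q) := by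
  unfold vecNorm
  rw [if_neg ENNReal.ofReal_ne_top, ENNReal.toReal_ofReal (by linarith)]

theorem vecNorm_ofReal_smul {n : ℕ} (q : ℝ) (hq : 1 ≤ q) (a : ℝ) (x : Fin n → ℝ) :
    vecNorm (ENNReal.ofReal q) (a • x) = |a| * vecNorm (ENNReal.ofReal q) x := by
  rw [vecNorm_ofReal q hq, vecNorm_ofReal q hq]
  have h : ∑ i, |(a • x) i| ^ q = |a| ^ q * ∑ i, |x i| ^ q := by
    rw [Finset.mul_sum]
    refine Finset.sum_congr rfl fun i _ => ?_
    rw [Pi.smul_apply, smul_eq_mul, abs_mul, Real.mul_rpow (abs_nonneg _) (abs_nonneg _)]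
  rw [h, Real.mul_rpow (by positivity) (by positivity), ← Real.rpow_mul (abs_nonneg _),
    mul_one_div_cancel (by linarith), Real.rpow_one]

theorem coeff_bound {a b c γ : ℝ} (hc : 0 ≤ c) (hγ : γ ^ 2 = 2 - 2 * c) (hγ0 : 0 < γ)
    (h : a ^ 2 + b ^ 2 + 2 * a * b * c = 1) : |a| ≤ 2 * Real.sqrt 2 / γ := by
  have h1 : a ^ 2 * (1 - c ^ 2) ≤ 1 := by nlinarith [sq_nonneg (a * c + b)]
  have h2 : γ ^ 2 / 2 ≤ 1 - c ^ 2 := by nlinarith [sq_nonneg γ]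
  have h3 : (|a| * γ) ^ 2 ≤ 2 := by
    rw [mul_pow, sq_abs]; nlinarith [sq_nonneg a]
  have h4 := Real.le_sqrt_of_sq_le h3
  rw [le_div_iff₀ hγ0]
  linarith [Real.sqrt_nonneg 2]

/-- Let `q* ∈ [1,2]`, and let `u, v` be unit vectors with `⟨u,v⟩ ≥ 0`,
`‖v‖_{q*} ≤ κ₁`, `‖u‖_{q*} ≤ κ₂`, and `γ = ‖u − v‖₂ > 0`. Then every unit vector `z` in the
span of `{u, v}` satisfies `‖z‖_{q*} ≤ (2√2/γ)(κ₁ + κ₂)`. -/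
theorem span_sparsity_bound {n : ℕ} (qs : ℝ) (hqs1 : 1 ≤ qs) (hqs2 : qs ≤ 2)
    (u v : Fin n → ℝ) (hu : vecNorm 2 u = 1) (hv : vecNorm 2 v = 1)
    (huv : 0 ≤ ∑ i, u i * v i)
    (κ₁ κ₂ : ℝ) (hvq : vecNorm (ENNReal.ofReal qs) v ≤ κ₁)
    (huq : vecNorm (ENNReal.ofReal qs) u ≤ κ₂)
    (γ : ℝ) (hγ : γ = vecNorm 2 (u - v)) (hγ0 : 0 < γ) :
    ∀ z ∈ Submodule.span ℝ ({u, v} : Set (Fin n → ℝ)), vecNorm 2 z = 1 →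
      vecNorm (ENNReal.ofReal qs) z ≤ 2 * Real.sqrt 2 / γ * (κ₁ + κ₂) := by
  intro z hz hz1
  obtain ⟨a, b, rfl⟩ := Submodule.mem_span_pair.1 hz
  have eu := vecNorm_two_sq u
  have ev := vecNorm_two_sq v
  have eg := vecNorm_two_sq (u - v)
  have ez := vecNorm_two_sq (a • u + b • v)
  rw [hu] at eu
  rw [hv] at ev
  rw [← hγ] at eg
  rw [hz1] at ez
  have eg' : ∑ i, (u - v) i * (u - v) i
      = ∑ i, u i * u i + ∑ i, v i * v i - 2 * ∑ i, u i * v i := by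
    rw [Finset.mul_sum, ← Finset.sum_add_distrib, ← Finset.sum_sub_distrib]
    refine Finset.sum_congr rfl fun i _ => ?_
    simp only [Pi.sub_apply]; ring
  have ez' : ∑ i, (a • u + b • v) i * (a • u + b • v) i
      = a ^ 2 * ∑ i, u i * u i + b ^ 2 * ∑ i, v i * v i + 2 * a * b * ∑ i, u i * v i := by
    rw [Finset.mul_sum, Finset.mul_sum, Finset.mul_sum, ← Finset.sum_add_distrib,
      ← Finset.sum_add_distrib]
    refine Finset.sum_congr rfl fun i _ => ?_
    simp only [Pi.add_apply, Pi.smul_apply, smul_eq_mul]; ring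
  rw [eg', ← eu, ← ev] at eg
  rw [ez', ← eu, ← ev] at ez
  have ha : |a| ≤ 2 * Real.sqrt 2 / γ := coeff_bound huv (by linarith) hγ0 (b := b) (by linarith)
  have hb : |b| ≤ 2 * Real.sqrt 2 / γ := coeff_bound huv (by linarith) hγ0 (b := a) (by linarith)
  have htri : vecNorm (ENNReal.ofReal qs) (a • u + b • v) ≤
      vecNorm (ENNReal.ofReal qs) (a • u) + vecNorm (ENNReal.ofReal qs) (b • v) := by
    rw [vecNorm_ofReal qs hqs1, vecNorm_ofReal qs hqs1, vecNorm_ofReal qs hqs1]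
    exact Real.Lp_add_le Finset.univ (a • u) (b • v) hqs1
  rw [vecNorm_ofReal_smul qs hqs1, vecNorm_ofReal_smul qs hqs1] at htri
  have hnn : ∀ x : Fin n → ℝ, 0 ≤ vecNorm (ENNReal.ofReal qs) x := by
    intro x
    rw [vecNorm_ofReal qs hqs1]
    positivity
  have hK : 0 ≤ 2 * Real.sqrt 2 / γ := by positivity
  have h1 := mul_le_mul ha huq (hnn u) hK
  have h2 := mul_le_mul hb hvq (hnn v) hK
  linarith
end

section
/- Let Π* ∈ ℝ^{n×n} be an orthogonal projection matrix of rank r, let ε ≥ 0, and let X ∈ ℝ^{n×n} be a symmetric matrix with 0 ⪯ X ⪯ I, tr(X) = r, and ⟨Π*, X⟩ ≥ r − ε. Let X = ∑_{i=1}^n λ_i u_i u_iᵀ be an eigendecomposition of X with orthonormal eigenvectors and eigenvalues λ₁ ≥ λ₂ ≥ … ≥ λ_n, and let Π := ∑_{i=1}^r u_i u_iᵀ be the orthogonal projection onto the span of the top r eigenvectors. Then ⟨Π*, Π⟩ ≥ r − 2ε. -/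
open scoped BigOperators ENNReal
open Matrix

theorem aux_trace_rank {n : ℕ} (P : Matrix (Fin n) (Fin n) ℝ) (h : P * P = P) :
    P.trace = P.rank := by
  have h2 : IsIdempotentElem (Matrix.toLin' P) := by
    unfold IsIdempotentElem
    rw [Module.End.mul_eq_comp, ← Matrix.toLin'_mul, h]
  have h3 := ((LinearMap.isProj_range_iff_isIdempotentElem _).mpr h2).trace
  rw [Matrix.trace_toLin'_eq] at h3
  rw [h3]
  rfl

theorem aux_comb {n r : ℕ} (hr : r ≤ n) (ε : ℝ) (p lam : Fin n → ℝ)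
    (p0 : ∀ i, 0 ≤ p i) (p1 : ∀ i, p i ≤ 1) (l0 : ∀ i, 0 ≤ lam i) (l1 : ∀ i, lam i ≤ 1)
    (hp : ∑ i, p i = r) (hl : ∑ i, lam i = r) (h : r - ε ≤ ∑ i, lam i * p i)
    (hs : ∀ i j : Fin n, i ≤ j → lam j ≤ lam i) :
    (r : ℝ) - 2 * ε ≤ ∑ i ∈ Finset.univ.filter (fun i : Fin n => (i : ℕ) < r), p i := by
  have ht : ∃ t : ℝ, ∀ i : Fin n, ((i : ℕ) < r → t ≤ lam i) ∧ (¬ (i : ℕ) < r → lam i ≤ t) := by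
    rcases Nat.eq_zero_or_pos r with h0 | h0
    · exact ⟨1, fun i => ⟨fun h => by omega, fun _ => l1 i⟩⟩
    · refine ⟨lam ⟨r - 1, by omega⟩, fun i => ⟨fun h => hs _ _ ?_, fun h => hs _ _ ?_⟩⟩
      · rw [Fin.le_def]; simp only; omega
      · rw [Fin.le_def]; simp only; omega
  obtain ⟨t, ht⟩ := ht
  have hq : ∑ i : Fin n, (if (i : ℕ) < r then (1 : ℝ) else 0) = r := by
    rw [Fin.sum_univ_eq_sum_range (fun i => if i < r then (1 : ℝ) else 0) n, ← Finset.sum_filter]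
    have : (Finset.range n).filter (fun i => i < r) = Finset.range r := by
      ext i; simp only [Finset.mem_filter, Finset.mem_range]; omega
    rw [this]; simp
  rw [Finset.sum_filter]
  have key1 : ∑ i : Fin n, t * ((if (i : ℕ) < r then (1 : ℝ) else 0) - p i) ≤
      ∑ i : Fin n, lam i * ((if (i : ℕ) < r then (1 : ℝ) else 0) - p i) := by
    refine Finset.sum_le_sum fun i _ => ?_
    split_ifs with hi
    · nlinarith [(ht i).1 hi, p1 i]
    · nlinarith [(ht i).2 hi, p0 i]
  have key2 : ∑ i : Fin n, (lam i * p i - lam i + lam i * (if (i : ℕ) < r then (1 : ℝ) else 0)) ≤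
      ∑ i : Fin n, (if (i : ℕ) < r then p i else 0) := by
    refine Finset.sum_le_sum fun i _ => ?_
    split_ifs with hi
    · nlinarith [p0 i, l1 i]
    · nlinarith [p1 i, l0 i]
  rw [← Finset.mul_sum, Finset.sum_sub_distrib, hq, hp] at key1
  simp only [mul_sub, Finset.sum_sub_distrib] at key1
  rw [Finset.sum_add_distrib, Finset.sum_sub_distrib, hl] at key2
  linarith

theorem aux_tr {n : ℕ} (P : Matrix (Fin n) (Fin n) ℝ) (v : Fin n → ℝ) :
    (P * Matrix.vecMulVec v v).trace = v ⬝ᵥ (P *ᵥ v) := by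
  rw [Matrix.mul_vecMulVec, Matrix.trace_vecMulVec, dotProduct_comm]

theorem aux_nonneg {n : ℕ} (P : Matrix (Fin n) (Fin n) ℝ) (hs : P.IsSymm) (h : P * P = P)
    (v : Fin n → ℝ) : 0 ≤ v ⬝ᵥ (P *ᵥ v) := by
  have : v ⬝ᵥ (P *ᵥ v) = (P *ᵥ v) ⬝ᵥ (P *ᵥ v) := by
    conv_lhs => rw [← h, ← Matrix.mulVec_mulVec, Matrix.dotProduct_mulVec, ← Matrix.mulVec_transpose, hs.eq]
  rw [this]
  exact Finset.sum_nonneg fun i _ => mul_self_nonneg _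

/-- Let `Π*` be a rank-`r` orthogonal projection, `ε ≥ 0`, and let `X` be
symmetric with `0 ⪯ X ⪯ I`, `tr X = r`, `⟨Π*, X⟩ ≥ r − ε`. If `X = ∑ᵢ λᵢ uᵢuᵢᵀ` is an
eigendecomposition with orthonormal eigenvectors and nonincreasing eigenvalues, then the
projection `Π` onto the top `r` eigenvectors satisfies `⟨Π*, Π⟩ ≥ r − 2ε`. -/
theorem top_eigenspace_correlation {n r : ℕ} (hr : r ≤ n)
    (Pstar : Matrix (Fin n) (Fin n) ℝ) (hPstarSym : Pstar.IsSymm)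
    (hPstarProj : Pstar * Pstar = Pstar) (hPstarRank : Pstar.rank = r)
    (ε : ℝ) (hε : 0 ≤ ε)
    (X : Matrix (Fin n) (Fin n) ℝ) (hXsym : X.IsSymm)
    (hX0 : X.PosSemidef) (hX1 : ((1 : Matrix (Fin n) (Fin n) ℝ) - X).PosSemidef)
    (htr : X.trace = (r : ℝ))
    (hinner : (r : ℝ) - ε ≤ (Pstarᵀ * X).trace)
    (u : Fin n → Fin n → ℝ) (lam : Fin n → ℝ)
    (horth : ∀ i j, (∑ k, u i k * u j k) = if i = j then 1 else 0)
    (hsorted : ∀ i j : Fin n, i ≤ j → lam j ≤ lam i)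
    (hXeig : X = ∑ i, lam i • Matrix.vecMulVec (u i) (u i)) :
    (r : ℝ) - 2 * ε ≤
      (Pstarᵀ * ∑ i ∈ Finset.univ.filter (fun i : Fin n => (i : ℕ) < r),
          Matrix.vecMulVec (u i) (u i)).trace := by
  have horth' : ∀ i j, u i ⬝ᵥ u j = if i = j then 1 else 0 := horth
  have hlam : ∀ i, u i ⬝ᵥ (X *ᵥ u i) = lam i := by
    intro i
    rw [hXeig, Matrix.sum_mulVec, dotProduct_sum]
    rw [Finset.sum_eq_single i]
    · simp [Matrix.smul_mulVec, Matrix.vecMulVec_mulVec, horth']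
    · intro j _ hj
      simp [Matrix.smul_mulVec, Matrix.vecMulVec_mulVec, horth', hj]
    · simp
  have hone : ∑ i, Matrix.vecMulVec (u i) (u i) = 1 := by
    have h1 : (Matrix.of u) * (Matrix.of u)ᵀ = 1 := by
      ext i j
      simp [Matrix.mul_apply, horth, Matrix.one_apply]
    have h2 := mul_eq_one_comm.mp h1
    rw [← h2]
    ext i j
    simp [Matrix.mul_apply, Matrix.sum_apply, Matrix.vecMulVec_apply]
  rw [hPstarSym.eq] at hinner ⊢
  rw [Finset.mul_sum, Matrix.trace_sum]
  simp only [aux_tr]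
  refine aux_comb hr ε (fun i => u i ⬝ᵥ (Pstar *ᵥ u i)) lam
    (fun i => aux_nonneg _ hPstarSym hPstarProj _) ?_ ?_ ?_ ?_ ?_ ?_ hsorted
  · intro i
    have := aux_nonneg (1 - Pstar) (by simp [Matrix.IsSymm, hPstarSym.eq])
      (by simp [mul_sub, sub_mul, hPstarProj]) (u i)
    rw [Matrix.sub_mulVec, dotProduct_sub, Matrix.one_mulVec, horth', if_pos rfl] at this
    linarith
  · intro i
    rw [← hlam i]
    simpa using hX0.dotProduct_mulVec_nonneg (u i)
  · intro i
    have := hX1.dotProduct_mulVec_nonneg (u i)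
    rw [star_trivial, Matrix.sub_mulVec, dotProduct_sub, Matrix.one_mulVec, horth', if_pos rfl,
      hlam] at this
    linarith
  · simp only [← aux_tr]
    rw [← Matrix.trace_sum, ← Finset.mul_sum, hone, mul_one, aux_trace_rank _ hPstarProj,
      hPstarRank]
  · rw [← htr, hXeig, Matrix.trace_sum]
    simp [Matrix.trace_smul, Matrix.trace_vecMulVec, horth']
  · refine hinner.trans (le_of_eq ?_)
    rw [hXeig, Finset.mul_sum, Matrix.trace_sum]
    simp [aux_tr]
end
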